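/- arXiv:2509.03197 — 2 statements merged into one kernel-verified Lean document; each statement's English description precedes it below -/
import Mathlib

section
/- Let s ∈ ℂ with s not an odd positive integer, and let w ∈ ℂ with Re w > max(1, 3/2 − Re s). Then both series below converge absolutely and Σ_{d odd squarefree ≥ 1} L(s,χ_{8d})·d^{−w} = X_+(s) · Σ_{d odd squarefree ≥ 1} L(1−s,χ_{8d})·d^{−(s+w−1/2)}, where X_+(s) := (π/8)^{s−1/2}·Γ((1−s)/2)/Γ(s/2). -/
/-!
Poisson summation together with the evaluation of the Gauss sum of `χ_{8d}` gives
`θ_d(1 / x) = √x · θ_d(x)` for `θ_d(x) = ∑ χ_{8d}(n) exp(-π n² x / (8 d))`, hence the functional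
equation of `L(s, χ_{8d})` with root number `1`, and the identity holds term by term. Everything
then rests on absolute convergence. Squaring out `θ_d(x)` and summing over odd `d ≤ X`, the pairs
`(n, m)` with `n m` a square contribute trivially, while for the others `∑_d (8d | n m)` is small by
the Pólya–Vinogradov inequality; this bounds `∑_{d ≤ X} |θ_d(x)|` by `X (X / x)^(A / 2)` for
`x ≥ 1` and any `A > 1 / 2`. The functional equation of `θ_d` transfers the bound to `x ≤ 1`, and
the Mellin integral yields the mean value of `|L(s, χ_{8d})|` in every vertical line.
-/

open Complex

noncomputable section

/-- `X₊(s) = (π/8)^{s-1/2} Γ((1-s)/2)/Γ(s/2)`. -/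
def Xplus (s : ℂ) : ℂ :=
  ((Real.pi : ℂ) / 8) ^ (s - 1 / 2) * Complex.Gamma ((1 - s) / 2) / Complex.Gamma (s / 2)

open Filter Topology
open scoped Real ZMod

section ThetaSeries

variable {N : ℕ} [NeZero N]

/-- The two-sided theta series `∑ₙ Φ(n) e^{-π τ n²}` of a function `Φ` on `ℤ/N`. -/
def zmodTheta (Φ : ZMod N → ℂ) (τ : ℂ) : ℂ :=
  ∑' n : ℤ, Φ n * cexp (-π * τ * n ^ 2)

theorem summable_exp_neg_pi_mul_sq {τ : ℂ} (hτ : 0 < τ.re) :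
    Summable fun n : ℤ ↦ cexp (-π * τ * n ^ 2) := by
  refine ((summable_jacobiTheta₂_term_iff 0 (I * τ)).mpr (by simpa using hτ)).congr fun n ↦ ?_
  rw [jacobiTheta₂_term]
  congr 1
  linear_combination (π * τ * n ^ 2 : ℂ) * I_sq

theorem exists_norm_le_of_zmod (Φ : ZMod N → ℂ) : ∃ C, ∀ j, ‖Φ j‖ ≤ C :=
  (Set.finite_range fun j ↦ ‖Φ j‖).bddAbove.imp fun _ hC j ↦ hC ⟨j, rfl⟩

theorem summable_zmodTheta (Φ : ZMod N → ℂ) {τ : ℂ} (hτ : 0 < τ.re) :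
    Summable fun n : ℤ ↦ Φ n * cexp (-π * τ * n ^ 2) := by
  obtain ⟨C, hC⟩ := exists_norm_le_of_zmod Φ
  refine .of_norm_bounded ((summable_exp_neg_pi_mul_sq hτ).norm.mul_left C) fun n ↦ ?_
  rw [norm_mul]
  gcongr
  exact hC n

theorem tsum_int_eq_sum_zmod {f : ℤ → ℂ} (hf : Summable f) :
    ∑' n, f n = ∑ j : ZMod N, ∑' m : ℤ, f (j.val + N * m) := by
  obtain _ | k := N
  · exact absurd rfl (NeZero.ne 0)
  let e : Fin (k + 1) × ℤ ≃ ℤ := (Equiv.prodComm _ _).trans (Int.divModEquiv (k + 1)).symm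
  rw [← e.tsum_eq, Summable.tsum_prod (f := fun p ↦ f (e p)) (e.summable_iff.mpr hf), tsum_fintype]
  refine Finset.sum_congr rfl fun j _ ↦ tsum_congr fun m ↦ congrArg f ?_
  change m * ((k + 1 : ℕ) : ℤ) + (j : ℕ) = _
  rw [mul_comm, add_comm]
  rfl

theorem ofReal_mul_cpow {r : ℝ} (hr : 0 < r) {z : ℂ} (hz : z ≠ 0) (w : ℂ) :
    (r * z) ^ w = (r : ℂ) ^ w * z ^ w := by
  have hr' : (r : ℂ) ≠ 0 := ofReal_ne_zero.mpr hr.ne'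
  rw [cpow_def_of_ne_zero (mul_ne_zero hr' hz), log_ofReal_mul hr hz, cpow_def_of_ne_zero hr',
    cpow_def_of_ne_zero hz, add_mul, Complex.exp_add, ofReal_log hr.le]

theorem tsum_residueClass_exp_neg_pi_mul_sq {τ : ℂ} (hτ : 0 < τ.re) (j : ZMod N) :
    ∑' m : ℤ, cexp (-π * τ * ((j.val + N * m : ℤ) : ℂ) ^ 2) =
      1 / (N * τ ^ (1 / 2 : ℂ)) *
        ∑' k : ℤ, ZMod.stdAddChar (j * k : ZMod N) * cexp (-π * (1 / (N ^ 2 * τ)) * k ^ 2) := by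
  have hN : (N : ℂ) ≠ 0 := NeZero.ne _
  have hτ0 : τ ≠ 0 := by rintro rfl; simp at hτ
  have hNpos : (0 : ℝ) < N ^ 2 := by have := NeZero.pos N; positivity
  have hN2 : (N ^ 2 * τ : ℂ) = ((N ^ 2 : ℝ) : ℂ) * τ := by push_cast; rfl
  have hre : 0 < (N ^ 2 * τ : ℂ).re := by
    rw [hN2, re_ofReal_mul]
    positivity
  have hsqrt : (N ^ 2 * τ : ℂ) ^ (1 / 2 : ℂ) = N * τ ^ (1 / 2 : ℂ) := by
    rw [hN2, ofReal_mul_cpow hNpos hτ0, ofReal_pow, one_div, ofReal_natCast,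
      Complex.sq_cpow_two_inv (by simpa using NeZero.pos N)]
  have hcompl (m : ℤ) : cexp (-π * τ * ((j.val + N * m : ℤ) : ℂ) ^ 2) =
      cexp (-π * τ * j.val ^ 2) *
        cexp (-π * (N ^ 2 * τ) * m ^ 2 + 2 * π * (-τ * j.val * N) * m) := by
    rw [← Complex.exp_add]; congr 1; push_cast; ring
  have hchar (k : ℤ) : ZMod.stdAddChar (j * k : ZMod N) = cexp (2 * π * I * (j.val * k) / N) := by
    simpa using ZMod.stdAddChar_coe (N := N) (j.val * k)
  rw [tsum_congr hcompl, tsum_mul_left, Complex.tsum_exp_neg_quadratic hre, hsqrt, mul_left_comm,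
    ← tsum_mul_left]
  congr 1
  refine tsum_congr fun k ↦ ?_
  rw [hchar, ← Complex.exp_add, ← Complex.exp_add]
  congr 1
  field_simp
  linear_combination (-N ^ 2 * τ * (j.val ^ 2 * τ) : ℂ) * I_sq

theorem one_div_re_pos {z : ℂ} : 0 < (1 / z).re ↔ 0 < z.re := by
  obtain rfl | hz := eq_or_ne z 0
  · simp
  · rw [one_div, inv_re, div_pos_iff_of_pos_right (normSq_pos.mpr hz)]

theorem zmodTheta_eq_dft (Φ : ZMod N → ℂ) {τ : ℂ} (hτ : 0 < τ.re) :
    zmodTheta Φ τ = 1 / (N * τ ^ (1 / 2 : ℂ)) * zmodTheta (𝓕 Φ) (1 / (N ^ 2 * τ)) := by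
  have hre : 0 < (1 / (N ^ 2 * τ)).re := by
    rw [one_div_re_pos, ← ofReal_natCast, ← ofReal_pow, re_ofReal_mul]
    have hN : 0 < N := NeZero.pos N
    positivity
  have hsum (j : ZMod N) : Summable fun k : ℤ ↦
      ZMod.stdAddChar (j * k : ZMod N) * cexp (-π * (1 / (N ^ 2 * τ)) * k ^ 2) :=
    summable_zmodTheta (fun k ↦ ZMod.stdAddChar (j * k)) hre
  calc zmodTheta Φ τ
      = ∑ j : ZMod N, Φ j * ∑' m : ℤ, cexp (-π * τ * ((j.val + N * m : ℤ) : ℂ) ^ 2) := by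
        rw [zmodTheta, tsum_int_eq_sum_zmod (N := N) (summable_zmodTheta Φ hτ)]
        simp [tsum_mul_left]
    _ = 1 / (N * τ ^ (1 / 2 : ℂ)) *
          ∑' k : ℤ, (∑ j : ZMod N, ZMod.stdAddChar (j * k : ZMod N) * Φ j) *
            cexp (-π * (1 / (N ^ 2 * τ)) * k ^ 2) := by
        simp_rw [tsum_residueClass_exp_neg_pi_mul_sq hτ, Finset.sum_mul]
        rw [Summable.tsum_finsetSum fun j _ ↦ ?_, Finset.mul_sum]
        · refine Finset.sum_congr rfl fun j _ ↦ ?_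
          rw [mul_left_comm, ← tsum_mul_left]
          simp only [mul_left_comm, mul_assoc]
        · simpa only [mul_left_comm, mul_assoc] using (hsum j).mul_left (Φ j)
    _ = _ := by
        rw [zmodTheta, ← (Equiv.neg ℤ).tsum_eq]
        simp [ZMod.dft_apply]

theorem norm_exp_neg_pi_mul_sq (τ : ℂ) (n : ℤ) :
    ‖cexp (-π * τ * n ^ 2)‖ = Real.exp (-π * τ.re * n ^ 2) := by
  rw [Complex.norm_exp, show (-π * τ * n ^ 2 : ℂ) = ((-π * n ^ 2 : ℝ) : ℂ) * τ by push_cast; ring,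
    re_ofReal_mul]
  congr 1
  ring

theorem tendsto_zmodTheta {ι : Type*} {l : Filter ι} (Φ : ZMod N → ℂ) {τ : ι → ℂ}
    (hτ : Tendsto (fun i ↦ (τ i).re) l atTop) :
    Tendsto (fun i ↦ zmodTheta Φ (τ i)) l (𝓝 (Φ 0)) := by
  obtain ⟨C, hC⟩ := exists_norm_le_of_zmod Φ
  have hsum : Summable fun n : ℤ ↦ C * Real.exp (-π * n ^ 2) := by
    refine ((summable_exp_neg_pi_mul_sq (τ := 1) (by simp)).norm.mul_left C).congr fun n ↦ ?_
    rw [norm_exp_neg_pi_mul_sq, one_re, mul_one]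
  have hzero : Φ 0 = ∑' n : ℤ, if n = 0 then Φ 0 else 0 := by simp
  rw [hzero]
  refine tendsto_tsum_of_dominated_convergence hsum (fun n ↦ ?_) ?_
  · obtain rfl | hn := eq_or_ne n 0
    · simp [tendsto_const_nhds]
    · rw [if_neg hn, tendsto_zero_iff_norm_tendsto_zero]
      simp only [norm_mul, norm_exp_neg_pi_mul_sq]
      rw [← mul_zero ‖Φ n‖]
      refine (Real.tendsto_exp_atBot.comp ?_).const_mul _
      have hpos : 0 < π * (n : ℝ) ^ 2 := by positivity
      refine (tendsto_neg_atTop_atBot.comp (hτ.const_mul_atTop hpos)).congr fun i ↦ ?_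
      simp only [Function.comp_apply]
      ring
  · filter_upwards [hτ.eventually_ge_atTop 1] with i hi n
    rw [norm_mul, norm_exp_neg_pi_mul_sq]
    gcongr ?_ * Real.exp ?_
    · exact (norm_nonneg _).trans (hC 0)
    · exact hC n
    · nlinarith [mul_nonneg (mul_nonneg Real.pi_pos.le (sq_nonneg (n : ℝ))) (sub_nonneg.mpr hi)]

theorem tendsto_sqrt_mul_zmodTheta {ι : Type*} {l : Filter ι} (Φ : ZMod N → ℂ) {τ : ι → ℂ}
    (hτ : Tendsto (fun i ↦ (1 / τ i).re) l atTop) :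
    Tendsto (fun i ↦ τ i ^ (1 / 2 : ℂ) * zmodTheta Φ (τ i)) l (𝓝 ((∑ j, Φ j) / N)) := by
  have hN : (N : ℂ) ≠ 0 := NeZero.ne _
  have hNpos : 0 < N := NeZero.pos N
  have hinv : Tendsto (fun i ↦ (1 / (N ^ 2 * τ i)).re) l atTop := by
    refine (hτ.const_mul_atTop (r := 1 / (N : ℝ) ^ 2) (by positivity)).congr fun i ↦ ?_
    rw [← re_ofReal_mul]
    push_cast
    congr 1
    rw [div_mul_div_comm, one_mul]
  rw [← ZMod.dft_apply_zero Φ, div_eq_inv_mul (𝓕 Φ 0)]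
  refine ((tendsto_zmodTheta (𝓕 Φ) hinv).const_mul (N : ℂ)⁻¹).congr' ?_
  filter_upwards [hτ.eventually_gt_atTop 0] with i hi
  have hre : 0 < (τ i).re := one_div_re_pos.mp hi
  have hroot : τ i ^ (1 / 2 : ℂ) ≠ 0 := by
    rw [Ne, cpow_eq_zero_iff]
    rintro ⟨h, -⟩
    simp [h] at hre
  rw [zmodTheta_eq_dft Φ hre]
  field_simp

end ThetaSeries

section GaussSums

/-- The quadratic exponential `j ↦ e(a j² / N)` on `ℤ/N`, whose sum over `ℤ/N` is the quadratic
Gauss sum. -/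
def quadraticExp {N : ℕ} [NeZero N] (a j : ZMod N) : ℂ :=
  ZMod.stdAddChar (a * j ^ 2)

theorem quadraticExp_intCast {N : ℕ} [NeZero N] (a n : ℤ) :
    quadraticExp (a : ZMod N) n = cexp (2 * π * I * (a * n ^ 2) / N) := by
  rw [quadraticExp, ← Int.cast_pow, ← Int.cast_mul, ZMod.stdAddChar_coe]
  push_cast
  rfl

theorem one_add_I_mul_ne_zero (r : ℝ) : 1 + I * r ≠ 0 := fun h ↦ by
  simpa using congrArg re h

theorem one_div_sub_I_div (x : ℝ) {y : ℝ} (hy : y ≠ 0) :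
    1 / (x - I / y : ℂ) = I * y / (1 + I * (y * x : ℝ)) := by
  have hyC : (y : ℂ) ≠ 0 := ofReal_ne_zero.mpr hy
  have hfactor : I * y * (x - I / y) = 1 + I * (y * x : ℝ) := by
    push_cast
    field_simp
    linear_combination (-1 : ℂ) * I_sq
  rw [← hfactor, div_mul_cancel_left₀ (by simp [hyC]), one_div]

theorem sub_I_div_ne_zero (x : ℝ) {y : ℝ} (hy : y ≠ 0) : (x - I / y : ℂ) ≠ 0 := fun h ↦ by
  simpa [hy] using congrArg im h

theorem sqrt_mul_zmodTheta_quadraticExp {p q : ℕ} [NeZero p] [NeZero q] {x y : ℝ} (hx : 0 < x)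
    (hy : y = p / (2 * q)) :
    (x - I / y : ℂ) ^ (1 / 2 : ℂ) * zmodTheta (quadraticExp (q : ZMod p)) x =
      zmodTheta (quadraticExp (-p : ZMod (4 * q))) (x * (y ^ 2 / (1 + I * (y * x : ℝ)))) := by
  have hp : (p : ℂ) ≠ 0 := NeZero.ne _
  have hq : (q : ℂ) ≠ 0 := NeZero.ne _
  have hw := one_add_I_mul_ne_zero (y * x)
  have hyC : (y : ℂ) = p / (2 * q) := by rw [hy]; push_cast; rfl
  have hyC0 : (y : ℂ) ≠ 0 := by simp [hyC, hp, hq]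
  have hy0 : y ≠ 0 := ofReal_ne_zero.mp hyC0
  have hroot : (x - I / y : ℂ) ^ (1 / 2 : ℂ) ≠ 0 := by
    simp [cpow_eq_zero_iff, sub_I_div_ne_zero x hy0]
  have hpoisson := Complex.tsum_exp_neg_quadratic (a := x - I / y) (by simpa [div_ofReal_re]) 0
  calc (x - I / y : ℂ) ^ (1 / 2 : ℂ) * zmodTheta (quadraticExp (q : ZMod p)) x
      = (x - I / y : ℂ) ^ (1 / 2 : ℂ) *
          ∑' n : ℤ, cexp (-π * (x - I / y) * n ^ 2 + 2 * π * 0 * n) := by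
        refine congrArg _ (tsum_congr fun n ↦ ?_)
        rw [← Int.cast_natCast, quadraticExp_intCast, ← Complex.exp_add, hyC]
        congr 1
        push_cast
        field_simp
        ring
    _ = ∑' n : ℤ, cexp (-π / (x - I / y) * (n + I * 0) ^ 2) := by
        rw [hpoisson, ← mul_assoc, mul_one_div_cancel hroot, one_mul]
    _ = _ := by
        refine tsum_congr fun n ↦ ?_
        rw [← Int.cast_natCast p, ← Int.cast_neg, quadraticExp_intCast, ← Complex.exp_add]
        have hδ : (x * (y ^ 2 / (1 + I * (y * x : ℝ))) : ℂ) = 1 / (x - I / y) - I * y := by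
          rw [one_div_sub_I_div x hy0, eq_sub_iff_add_eq]
          field_simp
          push_cast
          linear_combination (y * x : ℂ) * I_sq
        rw [hδ, hyC]
        congr 1
        push_cast
        field_simp
        ring

theorem neg_I_div_cpow_half {y : ℝ} (hy : 0 < y) :
    (-(I / y)) ^ (1 / 2 : ℂ) = (1 - I) / √(2 * y) := by
  have hyC : (y : ℂ) ≠ 0 := ofReal_ne_zero.mpr hy.ne'
  have hsq : -(I / y) = ((1 - I) / √(2 * y)) ^ 2 := by
    rw [div_pow, ← ofReal_pow, Real.sq_sqrt (by positivity)]
    push_cast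
    field_simp
    linear_combination (-1 : ℂ) * I_sq
  rw [hsq, one_div, Complex.sq_cpow_two_inv]
  rw [div_ofReal_re]
  simp only [sub_re, one_re, I_re, sub_zero]
  positivity

theorem tendsto_sqrt_mul_sqrt {y : ℝ} (hy : 0 < y) :
    Tendsto (fun x : ℝ ↦ (y ^ 2 / (1 + I * (y * x : ℝ)) : ℂ) ^ (1 / 2 : ℂ) *
      (x - I / y : ℂ) ^ (1 / 2 : ℂ)) (𝓝[>] 0) (𝓝 (y * ((1 - I) / √(2 * y)))) := by
  have hsqrt : ((y : ℂ) ^ 2) ^ (1 / 2 : ℂ) = y := by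
    rw [one_div, Complex.sq_cpow_two_inv (by simpa using hy)]
  have hv : Tendsto (fun x : ℝ ↦ (y ^ 2 / (1 + I * (y * x : ℝ)) : ℂ)) (𝓝[>] 0) (𝓝 (y ^ 2)) := by
    have : ContinuousAt (fun x : ℝ ↦ (y ^ 2 / (1 + I * (y * x : ℝ)) : ℂ)) 0 :=
      ContinuousAt.div₀ (by fun_prop) (by fun_prop) (one_add_I_mul_ne_zero _)
    simpa using this.tendsto.mono_left nhdsWithin_le_nhds
  have hu : Tendsto (fun x : ℝ ↦ (x - I / y : ℂ)) (𝓝[>] 0) (𝓝 (-(I / y))) := by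
    have : ContinuousAt (fun x : ℝ ↦ (x - I / y : ℂ)) 0 := by fun_prop
    simpa using this.tendsto.mono_left nhdsWithin_le_nhds
  rw [← neg_I_div_cpow_half hy]
  nth_rw 3 [← hsqrt]
  refine (hv.cpow tendsto_const_nhds ?_).mul (hu.cpow tendsto_const_nhds ?_)
  · exact_mod_cast ofReal_mem_slitPlane.mpr (pow_pos hy 2)
  · simp [mem_slitPlane_iff, hy.ne']

theorem tendsto_re_one_div_mul {y : ℝ} (hy : 0 < y) :
    Tendsto (fun x : ℝ ↦ (1 / (x * (y ^ 2 / (1 + I * (y * x : ℝ)))) : ℂ).re) (𝓝[>] 0) atTop := by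
  refine (tendsto_inv_nhdsGT_zero.const_mul_atTop (inv_pos.mpr (pow_pos hy 2))).congr'
    (eventually_mem_nhdsWithin.mono fun x (hx : 0 < x) ↦ ?_)
  have hxC : (x : ℂ) ≠ 0 := ofReal_ne_zero.mpr hx.ne'
  have hyC : (y : ℂ) ≠ 0 := ofReal_ne_zero.mpr hy.ne'
  have hsplit : (1 / (x * (y ^ 2 / (1 + I * (y * x : ℝ)))) : ℂ) =
      (((y ^ 2)⁻¹ * x⁻¹ : ℝ) : ℂ) + ((y⁻¹ : ℝ) : ℂ) * I := by
    have hw := one_add_I_mul_ne_zero (y * x)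
    push_cast at hw ⊢
    field_simp
  simp only [hsplit]
  rw [add_re, ofReal_re, re_ofReal_mul, I_re, mul_zero, add_zero]

/-- Landsberg–Schaar reciprocity. Both sides describe the growth of one theta function as its
argument tends to the boundary point `-2iq/p`. -/
theorem sum_quadraticExp_reciprocity (p q : ℕ) [NeZero p] [NeZero q] :
    ∑ j, quadraticExp (q : ZMod p) j =
      (1 + I) / 4 * √(p / q) * ∑ j, quadraticExp (-p : ZMod (4 * q)) j := by
  have hp : (0 : ℝ) < p := mod_cast NeZero.pos p
  have hq : (0 : ℝ) < q := mod_cast NeZero.pos q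
  obtain ⟨y, hy⟩ : ∃ y : ℝ, y = p / (2 * q) := ⟨_, rfl⟩
  have hypos : 0 < y := by rw [hy]; positivity
  have hleft := tendsto_sqrt_mul_zmodTheta (l := 𝓝[>] 0) (quadraticExp (q : ZMod p))
    (τ := fun x : ℝ ↦ (x : ℂ)) (by
      simpa [← ofReal_inv, -ofReal_inv] using tendsto_inv_nhdsGT_zero (𝕜 := ℝ))
  have hright := tendsto_sqrt_mul_zmodTheta (l := 𝓝[>] 0) (quadraticExp (-p : ZMod (4 * q)))
    (tendsto_re_one_div_mul hypos)
  have heq := tendsto_nhds_unique_of_eventuallyEq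
    ((tendsto_sqrt_mul_sqrt hypos).mul hleft) hright ?_
  · have hpC : (p : ℂ) ≠ 0 := NeZero.ne _
    have hqC : (q : ℂ) ≠ 0 := NeZero.ne _
    have hyC : (y : ℂ) = p / (2 * q) := by rw [hy]; push_cast; rfl
    have hr : (√(p / q) : ℂ) ≠ 0 := ofReal_ne_zero.mpr (by positivity)
    rw [show 2 * y = p / q by rw [hy]; field_simp, hyC] at heq
    push_cast at heq
    field_simp at heq
    linear_combination (1 + I) / 8 * heq + (∑ j, quadraticExp (q : ZMod p) j) / 2 * I_sq
  · filter_upwards [self_mem_nhdsWithin] with x hx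
    have hvx : (y ^ 2 / (1 + I * (y * x : ℝ)) : ℂ) ≠ 0 :=
      div_ne_zero (by simpa using hypos.ne') (one_add_I_mul_ne_zero _)
    rw [ofReal_mul_cpow hx hvx, ← sqrt_mul_zmodTheta_quadraticExp hx hy]
    ring

theorem sum_quadraticExp_one (N : ℕ) [NeZero N] :
    ∑ j, quadraticExp (1 : ZMod N) j = (1 + I) / 2 * √N * (1 + (-I) ^ N) := by
  have hone : ZMod.stdAddChar (-N : ZMod 4) = (-I) ^ N := by
    have h := ZMod.stdAddChar_coe (N := 4) (-N)
    push_cast at h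
    rw [h, ← exp_neg_pi_div_two_mul_I, ← Complex.exp_nat_mul]
    congr 1
    ring
  have hfour : ∑ j, quadraticExp (-N : ZMod 4) j = 2 * (1 + (-I) ^ N) := by
    have h2 : (2 : ZMod 4) ^ 2 = 0 := rfl
    have h3 : (3 : ZMod 4) ^ 2 = 1 := rfl
    rw [show (Finset.univ : Finset (ZMod 4)) = {0, 1, 2, 3} from rfl,
      Finset.sum_insert (by decide), Finset.sum_insert (by decide), Finset.sum_insert (by decide),
      Finset.sum_singleton]
    simp only [quadraticExp, h2, h3, one_pow, mul_one, zero_pow two_ne_zero, mul_zero, hone,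
      AddChar.map_zero_eq_one]
    ring
  have hrec : ∑ j, quadraticExp (1 : ZMod N) j =
      (1 + I) / 4 * √N * ∑ j, quadraticExp (-N : ZMod 4) j := by
    have := sum_quadraticExp_reciprocity N 1
    simp only [Nat.cast_one, div_one] at this
    exact this
  rw [hrec, hfour]
  ring

end GaussSums

section QuadraticCharacters

variable {N a b : ℕ} [NeZero N] [NeZero a] [NeZero b]

theorem dft_eq_sum_mul (Φ : ZMod N → ℂ) (k : ZMod N) :
    𝓕 Φ k = ∑ j, ZMod.stdAddChar (-(j * k)) * Φ j := by
  simp only [ZMod.dft_apply, smul_eq_mul]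

theorem sum_zmod_mul_of_coprime (hab : a.Coprime b) (F : ZMod (a * b) → ℂ) :
    ∑ j, F j = ∑ x : ZMod a, ∑ y : ZMod b, F (b * x.val + a * y.val) := by
  let crt : ZMod a × ZMod b → ZMod (a * b) := fun z ↦ b * z.1.val + a * z.2.val
  have hcrt : Function.Injective crt := by
    rintro ⟨x, y⟩ ⟨x', y'⟩ h
    have hmod : b * x.val + a * y.val ≡ b * x'.val + a * y'.val [MOD a * b] := by
      rw [← ZMod.natCast_eq_natCast_iff]
      push_cast
      exact h
    have hx := (ZMod.natCast_eq_natCast_iff _ _ _).2 (hmod.of_mul_right b)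
    have hy := (ZMod.natCast_eq_natCast_iff _ _ _).2 (hmod.of_mul_left a)
    push_cast at hx hy
    simp only [ZMod.natCast_self, zero_mul, add_zero, zero_add, ZMod.natCast_zmod_val] at hx hy
    exact Prod.ext (((ZMod.isUnit_iff_coprime b a).2 hab.symm).mul_left_cancel hx)
      (((ZMod.isUnit_iff_coprime a b).2 hab).mul_left_cancel hy)
  have hbij : Function.Bijective crt :=
    (Fintype.bijective_iff_injective_and_card crt).2 ⟨hcrt, by simp [ZMod.card]⟩
  rw [← Fintype.sum_prod_type', ← hbij.sum_comp]

theorem dft_eq_smul_of_forall_mul (hab : a.Coprime b) {χ : DirichletCharacter ℂ a}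
    {ψ : DirichletCharacter ℂ b} {Φ : ZMod (a * b) → ℂ} (hΦ : ∀ n : ℕ, Φ n = χ n * ψ n)
    {c c' : ℂ} (hχ : 𝓕 (χ : ZMod a → ℂ) = c • ⇑χ) (hψ : 𝓕 (ψ : ZMod b → ℂ) = c' • ⇑ψ) :
    𝓕 Φ = (χ b * ψ a * (c * c')) • Φ := by
  have ha : (a : ℂ) ≠ 0 := NeZero.ne _
  have hb : (b : ℂ) ≠ 0 := NeZero.ne _
  have hterm (n : ℕ) (x : ZMod a) (y : ZMod b) :
      ZMod.stdAddChar (-((b * x.val + a * y.val : ZMod (a * b)) * (n : ZMod (a * b)))) *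
        Φ (b * x.val + a * y.val) =
      χ b * ψ a * ((ZMod.stdAddChar (-(x * (n : ZMod a))) * χ x) *
        (ZMod.stdAddChar (-(y * (n : ZMod b))) * ψ y)) := by
    have hval : Φ (b * x.val + a * y.val) = χ b * χ x * (ψ a * ψ y) := by
      have := hΦ (b * x.val + a * y.val)
      push_cast at this
      rw [this]
      simp
    have hexp :
        (ZMod.stdAddChar (-((b * x.val + a * y.val : ZMod (a * b)) * (n : ZMod (a * b)))) : ℂ) =
          ZMod.stdAddChar (-(x * (n : ZMod a))) * ZMod.stdAddChar (-(y * (n : ZMod b))) := by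
      have hab := ZMod.stdAddChar_coe (N := a * b) (-((b * x.val + a * y.val) * n))
      have hx := ZMod.stdAddChar_coe (N := a) (-(x.val * n))
      have hy := ZMod.stdAddChar_coe (N := b) (-(y.val * n))
      push_cast at hab hx hy
      rw [ZMod.natCast_zmod_val] at hx hy
      rw [hab, hx, hy, ← Complex.exp_add]
      congr 1
      field_simp
      ring
    rw [hval, hexp]
    ring
  ext k
  obtain ⟨n, rfl⟩ := ZMod.natCast_zmod_surjective k
  have hχn := congrFun hχ n
  have hψn := congrFun hψ n
  rw [dft_eq_sum_mul] at hχn hψn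
  rw [dft_eq_sum_mul, sum_zmod_mul_of_coprime hab]
  simp only [hterm, ← Finset.mul_sum, ← Finset.sum_mul, hχn, hψn, Pi.smul_apply, smul_eq_mul, hΦ]
  ring

theorem dft_eq_smul_of_isPrimitive {χ : DirichletCharacter ℂ N} (hχ : χ.IsPrimitive)
    (hquad : χ.IsQuadratic) :
    𝓕 (χ : ZMod N → ℂ) = (χ (-1) * gaussSum χ ZMod.stdAddChar) • ⇑χ := by
  ext k
  rw [hχ.fourierTransform_eq_inv_mul_gaussSum, hquad.inv, neg_eq_neg_one_mul, map_mul,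
    Pi.smul_apply, smul_eq_mul]
  ring

/-- The Jacobi symbol `(· / k)` as a Dirichlet character modulo `k`. -/
def jacobiChar (k : ℕ) [NeZero k] : DirichletCharacter ℂ k where
  toFun j := jacobiSym j.val k
  map_one' := by
    have := ZMod.val_intCast (n := k) 1
    push_cast at this
    rw [this, ← jacobiSym.mod_left, jacobiSym.one_left, Int.cast_one]
  map_mul' x y := by
    rw [ZMod.val_mul, Int.natCast_mod, ← jacobiSym.mod_left, Nat.cast_mul, jacobiSym.mul_left,
      Int.cast_mul]
  map_nonunit' x hx := by
    rw [← ZMod.natCast_zmod_val x, ZMod.isUnit_iff_coprime] at hx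
    rw [Int.cast_eq_zero, jacobiSym.eq_zero_iff_not_coprime]
    rwa [Int.gcd_natCast_natCast]

theorem jacobiChar_intCast (n : ℤ) : jacobiChar N n = jacobiSym n N := by
  change ((jacobiSym _ N : ℤ) : ℂ) = _
  rw [ZMod.val_intCast, ← jacobiSym.mod_left]

theorem jacobiChar_natCast (n : ℕ) : jacobiChar N n = jacobiSym n N := by
  have := jacobiChar_intCast (N := N) n
  rwa [Int.cast_natCast] at this

theorem jacobiChar_isQuadratic : (jacobiChar N).IsQuadratic := by
  intro j
  obtain ⟨n, rfl⟩ := ZMod.intCast_surjective j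
  rw [jacobiChar_intCast]
  rcases jacobiSym.trichotomy n N with h | h | h <;> simp [h]

section Prime

variable (p : ℕ) [Fact p.Prime]

theorem jacobiChar_prime_apply (x : ZMod p) : jacobiChar p x = quadraticChar (ZMod p) x := by
  obtain ⟨n, rfl⟩ := ZMod.intCast_surjective x
  rw [jacobiChar_intCast, ← jacobiSym.legendreSym.to_jacobiSym, legendreSym]

theorem jacobiChar_prime_isPrimitive (hp : p ≠ 2) : (jacobiChar p).IsPrimitive := by
  have hpp : p.Prime := Fact.out
  obtain ⟨x, hx⟩ := quadraticChar_exists_neg_one (F := ZMod p) (by rwa [ZMod.ringChar_zmod_n])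
  rw [DirichletCharacter.isPrimitive_def]
  refine (hpp.eq_one_or_self_of_dvd _ (jacobiChar p).conductor_dvd_level).resolve_left fun h ↦ ?_
  have hone := (DirichletCharacter.eq_one_iff_conductor_eq_one).2 h
  have hval := jacobiChar_prime_apply p x
  have hunit : IsUnit x := by
    rw [isUnit_iff_ne_zero]
    rintro rfl
    simp at hx
  rw [hone, MulChar.one_apply hunit, hx] at hval
  norm_num at hval

theorem gaussSum_jacobiChar_prime (hp : p ≠ 2) :
    gaussSum (jacobiChar p) ZMod.stdAddChar = ∑ j, quadraticExp (1 : ZMod p) j := by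
  have hcount (x : ZMod p) : ∑ j with j ^ 2 = x, quadraticExp (1 : ZMod p) j =
      jacobiChar p x * ZMod.stdAddChar x + ZMod.stdAddChar x := by
    have hcard : (({j | j ^ 2 = x} : Finset (ZMod p)).card : ℤ) = quadraticChar (ZMod p) x + 1 := by
      rw [← quadraticChar_card_sqrts (by rwa [ZMod.ringChar_zmod_n]) x]
      congr
      ext
      simp
    have hconst : ∀ j ∈ ({j | j ^ 2 = x} : Finset (ZMod p)),
        quadraticExp (1 : ZMod p) j = ZMod.stdAddChar x := by
      intro j hj
      rw [quadraticExp, one_mul, (Finset.mem_filter.1 hj).2]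
    rw [Finset.sum_congr rfl hconst, Finset.sum_const, nsmul_eq_mul, jacobiChar_prime_apply,
      ← Int.cast_natCast, hcard]
    push_cast
    ring
  have hzero : ∑ x : ZMod p, ZMod.stdAddChar x = 0 := by
    refine AddChar.sum_eq_zero_of_ne_one fun h ↦ ZMod.isPrimitive_stdAddChar p one_ne_zero ?_
    ext
    simp [h]
  rw [← Finset.sum_fiberwise _ (fun j : ZMod p ↦ j ^ 2)]
  simp only [hcount, Finset.sum_add_distrib, hzero, add_zero, gaussSum]

end Prime

end QuadraticCharacters

section FourierSelfDuality

/-- The root number in `𝓕 (·/k) = gaussSign k * √k • (·/k)` for odd squarefree `k`; since Mathlib's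
discrete Fourier transform uses `exp (-2πi jk/N)`, it is `-i` rather than `i` when `k ≡ 3 mod 4`. -/
def gaussSign (k : ℕ) : ℂ := if k % 4 = 1 then 1 else -I

theorem gaussSign_of_odd {k : ℕ} (hk : Odd k) :
    gaussSign k = jacobiSym (-1) k * ((1 + I) / 2 * (1 + (-I) ^ k)) := by
  have hI4 : (-I) ^ 4 = 1 := by rw [Even.neg_pow (by decide), I_pow_four]
  have hpow : (-I) ^ k = (-I) ^ (k % 4) := by
    conv_lhs => rw [← Nat.div_add_mod k 4, pow_add, pow_mul, hI4, one_pow, one_mul]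
  rw [jacobiSym.at_neg_one hk, gaussSign, hpow]
  rcases Nat.odd_mod_four_iff.1 (Nat.odd_iff.1 hk) with h | h
  · rw [ZMod.χ₄_nat_one_mod_four h, h, if_pos rfl]
    push_cast
    linear_combination (1 / 2 : ℂ) * I_sq
  · rw [ZMod.χ₄_nat_three_mod_four h, h, if_neg (by decide)]
    push_cast
    linear_combination ((1 - I - I ^ 2) / 2) * I_sq

theorem jacobiSym_mul_jacobiSym_mul_gaussSign {a b : ℕ} (ha : Odd a) (hb : Odd b)
    (hab : a.Coprime b) :
    (jacobiSym b a : ℂ) * jacobiSym a b * (gaussSign a * gaussSign b) = gaussSign (a * b) := by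
  have hsq : (jacobiSym a b : ℂ) * jacobiSym a b = 1 := by
    have := jacobiSym.sq_one (a := a) (b := b) (by simpa using hab)
    rw [sq] at this
    exact_mod_cast this
  have hmod : a * b % 4 = (a % 4) * (b % 4) % 4 := Nat.mul_mod _ _ _
  rcases Nat.odd_mod_four_iff.1 (Nat.odd_iff.1 ha) with ha4 | ha4
  · rw [← jacobiSym.quadratic_reciprocity_one_mod_four ha4 hb, hsq]
    simp [gaussSign, hmod, ha4]
  · rcases Nat.odd_mod_four_iff.1 (Nat.odd_iff.1 hb) with hb4 | hb4
    · rw [jacobiSym.quadratic_reciprocity_one_mod_four hb4 ha, hsq]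
      simp [gaussSign, hmod, ha4, hb4]
    · rw [jacobiSym.quadratic_reciprocity_three_mod_four hb4 ha4]
      push_cast
      rw [neg_mul, hsq]
      simp [gaussSign, hmod, ha4, hb4]

theorem dft_jacobiChar_prime (p : ℕ) [Fact p.Prime] (hp : p ≠ 2) :
    𝓕 (jacobiChar p : ZMod p → ℂ) = (gaussSign p * √p) • ⇑(jacobiChar p) := by
  have hneg := jacobiChar_intCast (N := p) (-1)
  push_cast at hneg
  rw [dft_eq_smul_of_isPrimitive (jacobiChar_prime_isPrimitive p hp) jacobiChar_isQuadratic,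
    gaussSum_jacobiChar_prime p hp, sum_quadraticExp_one, hneg,
    gaussSign_of_odd ((Fact.out : p.Prime).odd_of_ne_two hp)]
  ring_nf

theorem dft_jacobiChar {k : ℕ} [NeZero k] (hk : Odd k) (hsq : Squarefree k) :
    𝓕 (jacobiChar k : ZMod k → ℂ) = (gaussSign k * √k) • ⇑(jacobiChar k) := by
  suffices h : ∀ m : ℕ, (hm : m ≠ 0) → Odd m → Squarefree m → haveI : NeZero m := ⟨hm⟩
      𝓕 (jacobiChar m : ZMod m → ℂ) = (gaussSign m * √m) • ⇑(jacobiChar m) from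
    h k (NeZero.ne k) hk hsq
  clear! k
  intro k
  induction k using induction_on_primes with
  | zero => exact fun h ↦ absurd rfl h
  | one =>
    intro _ _ _
    ext j
    rw [ZMod.dft_apply, Fintype.sum_subsingleton _ (1 : ZMod 1), Subsingleton.elim (-(1 * j)) 0,
      AddChar.map_zero_eq_one, Subsingleton.elim j 1]
    simp [gaussSign]
  | prime_mul p m hp ih =>
    intro hpm hodd hsq
    have : NeZero p := ⟨hp.ne_zero⟩
    have : NeZero m := ⟨right_ne_zero_of_mul hpm⟩
    have : Fact p.Prime := ⟨hp⟩
    obtain ⟨hpodd, hmodd⟩ := Nat.odd_mul.1 hodd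
    obtain ⟨hcop, -, hmsq⟩ := Nat.squarefree_mul_iff.1 hsq
    have hmul (n : ℕ) : jacobiChar (p * m) n = jacobiChar p n * jacobiChar m n := by
      simp only [jacobiChar_natCast, jacobiSym.mul_right, Int.cast_mul]
    have hp2 : p ≠ 2 := by
      rintro rfl
      exact absurd hpodd (by decide)
    rw [dft_eq_smul_of_forall_mul hcop hmul (dft_jacobiChar_prime p hp2)
      (ih (NeZero.ne m) hmodd hmsq), jacobiChar_natCast, jacobiChar_natCast,
      ← jacobiSym_mul_jacobiSym_mul_gaussSign hpodd hmodd hcop, Nat.cast_mul,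
      Real.sqrt_mul (by positivity), ofReal_mul]
    congr 1
    ring

theorem isPrimitive_of_map_five_ne_one {χ : DirichletCharacter ℂ 8} (h5 : χ 5 ≠ 1) :
    χ.IsPrimitive := by
  have hunit : ((ZMod.unitOfCoprime 5 (by decide : Nat.Coprime 5 8) : (ZMod 8)ˣ) : ZMod 8) = 5 :=
    ZMod.coe_unitOfCoprime _ _
  rw [DirichletCharacter.isPrimitive_def]
  by_contra h8
  have hdvd : χ.conductor ∣ 4 := by
    have hdvd : χ.conductor ∣ 2 ^ 3 := χ.conductor_dvd_level
    obtain ⟨i, hi, hcond⟩ := (Nat.dvd_prime_pow Nat.prime_two).1 hdvd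
    have : i ≠ 3 := by
      rintro rfl
      exact h8 hcond
    rw [hcond]
    exact pow_dvd_pow 2 (by omega : i ≤ 2)
  have hfac : χ.FactorsThrough 4 :=
    χ.factorsThrough_conductor.mono χ hdvd (by decide)
  have hker := (DirichletCharacter.factorsThrough_iff_ker_unitsMap (by decide)).1 hfac
  refine h5 ?_
  have hmem : ZMod.unitOfCoprime 5 (by decide : Nat.Coprime 5 8) ∈
      (ZMod.unitsMap (by decide : 4 ∣ 8)).ker := by
    rw [MonoidHom.mem_ker]
    decide
  have := hker hmem
  rw [MonoidHom.mem_ker, Units.ext_iff, MulChar.coe_toUnitHom, hunit] at this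
  exact this

theorem stdAddChar_one_mod_eight :
    (ZMod.stdAddChar (1 : ZMod 8) : ℂ) = (1 + I) * √2 / 2 := by
  have h := ZMod.stdAddChar_coe (N := 8) 1
  push_cast at h
  rw [h, show (2 * π * I * 1 / 8 : ℂ) = ((π / 4 : ℝ) : ℂ) * I by push_cast; ring,
    Complex.exp_mul_I, ← Complex.ofReal_cos, ← Complex.ofReal_sin, Real.cos_pi_div_four,
    Real.sin_pi_div_four]
  push_cast
  ring

theorem gaussSum_of_map_five {χ : DirichletCharacter ℂ 8} (h5 : χ 5 = -1) :
    gaussSum χ ZMod.stdAddChar = √2 * (1 + I) * (1 + χ 3 * I) := by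
  set ζ : ℂ := ZMod.stdAddChar (1 : ZMod 8)
  have hζ : ζ = (1 + I) * √2 / 2 := stdAddChar_one_mod_eight
  have hsqrt : (√2 : ℂ) ^ 2 = 2 := mod_cast Real.sq_sqrt zero_le_two
  have hζ2 : ζ ^ 2 = I := by
    rw [hζ]
    linear_combination ((1 + I) ^ 2 / 4) * hsqrt + 1 / 2 * I_sq
  have hpow (m : ℕ) : (ZMod.stdAddChar (m : ZMod 8) : ℂ) = ζ ^ m := by
    rw [← AddChar.map_nsmul_eq_pow, nsmul_one]
  have h7 : χ 7 = -χ 3 := by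
    rw [show (7 : ZMod 8) = 5 * 3 from rfl, map_mul, h5, neg_one_mul]
  have heven : χ 0 = 0 ∧ χ 2 = 0 ∧ χ 4 = 0 ∧ χ 6 = 0 :=
    ⟨χ.map_nonunit (by decide), χ.map_nonunit (by decide), χ.map_nonunit (by decide),
      χ.map_nonunit (by decide)⟩
  have e3 : ZMod.stdAddChar (3 : ZMod 8) = I * ζ := by
    have := hpow 3
    push_cast at this
    linear_combination this + ζ * hζ2
  have e5 : ZMod.stdAddChar (5 : ZMod 8) = -ζ := by
    have := hpow 5
    push_cast at this
    linear_combination this + ζ * (ζ ^ 2 + I) * hζ2 + ζ * I_sq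
  have e7 : ZMod.stdAddChar (7 : ZMod 8) = -I * ζ := by
    have := hpow 7
    push_cast at this
    linear_combination this + ζ * (ζ ^ 4 + ζ ^ 2 * I + I ^ 2) * hζ2 + ζ * I * I_sq
  rw [gaussSum, show (Finset.univ : Finset (ZMod 8)) = {0, 1, 2, 3, 4, 5, 6, 7} from rfl]
  repeat rw [Finset.sum_insert (by decide)]
  rw [Finset.sum_singleton, heven.1, heven.2.1, heven.2.2.1, heven.2.2.2, h5, h7, map_one, e3, e5,
    e7]
  linear_combination 2 * (1 + χ 3 * I) * hζ

theorem dft_of_map_five {χ : DirichletCharacter ℂ 8} (hχ : χ.IsQuadratic) (h5 : χ 5 = -1) :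
    𝓕 (χ : ZMod 8 → ℂ) = (-χ 3 * (√2 * (1 + I) * (1 + χ 3 * I))) • ⇑χ := by
  have hneg : χ (-1) = -χ 3 := by
    rw [show (-1 : ZMod 8) = 5 * 3 from rfl, map_mul, h5, neg_one_mul]
  rw [dft_eq_smul_of_isPrimitive (isPrimitive_of_map_five_ne_one (by rw [h5]; norm_num)) hχ, hneg,
    gaussSum_of_map_five h5]

theorem sqrt_eight : √8 = 2 * √2 := by
  rw [show (8 : ℝ) = 2 ^ 2 * 2 by norm_num, Real.sqrt_mul (by norm_num),
    Real.sqrt_sq zero_le_two]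

theorem dft_χ₈ : 𝓕 (ZMod.χ₈.ringHomComp (Int.castRingHom ℂ) : ZMod 8 → ℂ) =
    (√8 : ℂ) • ⇑(ZMod.χ₈.ringHomComp (Int.castRingHom ℂ)) := by
  rw [dft_of_map_five (ZMod.isQuadratic_χ₈.comp _), sqrt_eight]
  · congr 1
    have h3 : ZMod.χ₈ 3 = -1 := by decide
    simp only [MulChar.ringHomComp_apply, h3, ofReal_mul, eq_intCast]
    push_cast
    linear_combination (-√2 : ℂ) * I_sq
  · have h5 : ZMod.χ₈ 5 = -1 := by decide
    simp [h5]

theorem dft_χ₈' : 𝓕 (ZMod.χ₈'.ringHomComp (Int.castRingHom ℂ) : ZMod 8 → ℂ) =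
    (-I * √8) • ⇑(ZMod.χ₈'.ringHomComp (Int.castRingHom ℂ)) := by
  rw [dft_of_map_five (ZMod.isQuadratic_χ₈'.comp _), sqrt_eight]
  · congr 1
    have h3 : ZMod.χ₈' 3 = 1 := by decide
    simp only [MulChar.ringHomComp_apply, h3, ofReal_mul, eq_intCast]
    push_cast
    linear_combination (-√2 : ℂ) * I_sq
  · have h5 : ZMod.χ₈' 5 = -1 := by decide
    simp [h5]

end FourierSelfDuality

section KroneckerEight

/-- The Kronecker symbol `(8d/n)`, for odd `d`: it vanishes at even `n` and is a Jacobi symbol at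
odd `n`. -/
def kroneckerEight (d n : ℕ) : ℤ := if Odd n then jacobiSym (8 * d) n else 0

theorem jacobiSym_eight {n : ℕ} (hn : Odd n) : jacobiSym 8 n = ZMod.χ₈ n := by
  have hcube : ∀ x : ZMod 8, ZMod.χ₈ x * ZMod.χ₈ x * ZMod.χ₈ x = ZMod.χ₈ x := by decide
  rw [show (8 : ℤ) = 2 * 2 * 2 by norm_num, jacobiSym.mul_left, jacobiSym.mul_left,
    jacobiSym.at_two hn, hcube]

theorem kroneckerEight_of_mod_four_eq_one {d : ℕ} (hd : d % 4 = 1) (n : ℕ) :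
    kroneckerEight d n = ZMod.χ₈ n * jacobiSym n d := by
  rw [kroneckerEight]
  split_ifs with hn
  · rw [jacobiSym.mul_left, jacobiSym_eight hn, jacobiSym.quadratic_reciprocity_one_mod_four hd hn]
  · rw [ZMod.χ₈_nat_eq_if_mod_eight, if_pos (Nat.even_iff.1 (Nat.not_odd_iff_even.1 hn)), zero_mul]

theorem kroneckerEight_of_mod_four_eq_three {d : ℕ} (hd : d % 4 = 3) (n : ℕ) :
    kroneckerEight d n = ZMod.χ₈' n * jacobiSym n d := by
  have hdodd : Odd d := Nat.odd_iff.2 (Nat.odd_of_mod_four_eq_three hd)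
  have hχ : ZMod.χ₈' n = ZMod.χ₄ n * ZMod.χ₈ n := mod_cast ZMod.χ₈'_int_eq_χ₄_mul_χ₈ n
  rw [kroneckerEight]
  split_ifs with hn
  · rw [jacobiSym.mul_left, jacobiSym_eight hn, hχ]
    rcases Nat.odd_mod_four_iff.1 (Nat.odd_iff.1 hn) with h | h
    · rw [jacobiSym.quadratic_reciprocity_one_mod_four' hdodd h, ZMod.χ₄_nat_one_mod_four h,
        one_mul]
    · rw [jacobiSym.quadratic_reciprocity_three_mod_four hd h, ZMod.χ₄_nat_three_mod_four h]
      ring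
  · rw [ZMod.χ₈'_nat_eq_if_mod_eight, if_pos (Nat.even_iff.1 (Nat.not_odd_iff_even.1 hn)),
      zero_mul]

theorem χ₈_mul_self_of_odd {n : ℕ} (hn : Odd n) : ZMod.χ₈ n * ZMod.χ₈ n = 1 := by
  rw [Nat.odd_iff] at hn
  rw [ZMod.χ₈_nat_eq_if_mod_eight]
  split_ifs <;> omega

theorem dft_of_χ_mul_jacobiSym {d : ℕ} [NeZero d] (hd : Odd d) (hsq : Squarefree d)
    {χ : MulChar (ZMod 8) ℤ} {c : ℂ}
    (hχ : 𝓕 (χ.ringHomComp (Int.castRingHom ℂ) : ZMod 8 → ℂ) =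
      (c * √8) • ⇑(χ.ringHomComp (Int.castRingHom ℂ)))
    {Φ : ZMod (8 * d) → ℂ} (hΦ : ∀ n : ℕ, Φ n = (χ n * jacobiSym n d : ℤ)) :
    𝓕 Φ = ((χ d * ZMod.χ₈ d : ℤ) * c * gaussSign d * √(8 * d : ℕ)) • Φ := by
  have hcop : Nat.Coprime 8 d := (Nat.coprime_two_left.2 hd).pow_left 3
  have hmul (n : ℕ) : Φ n = χ.ringHomComp (Int.castRingHom ℂ) n * jacobiChar d n := by
    rw [hΦ, Int.cast_mul, MulChar.ringHomComp_apply, jacobiChar_natCast, eq_intCast]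
  rw [dft_eq_smul_of_forall_mul hcop hmul hχ (dft_jacobiChar hd hsq), MulChar.ringHomComp_apply,
    eq_intCast, jacobiChar_natCast, Nat.cast_ofNat, jacobiSym_eight hd, Nat.cast_mul,
    Nat.cast_ofNat, Real.sqrt_mul (by norm_num), ofReal_mul, Int.cast_mul]
  congr 1
  ring

theorem dft_eq_sqrt_smul_of_kroneckerEight {d : ℕ} [NeZero d] (hd : Odd d) (hsq : Squarefree d)
    {Φ : ZMod (8 * d) → ℂ} (hΦ : ∀ n : ℕ, Φ n = kroneckerEight d n) :
    𝓕 Φ = (√(8 * d : ℕ) : ℂ) • Φ := by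
  have hone : ZMod.χ₈ d * ZMod.χ₈ d = 1 := χ₈_mul_self_of_odd hd
  rcases Nat.odd_mod_four_iff.1 (Nat.odd_iff.1 hd) with h | h
  · rw [dft_of_χ_mul_jacobiSym hd hsq (χ := ZMod.χ₈) (c := 1) (by rw [one_mul, dft_χ₈])
      fun n ↦ by rw [hΦ, kroneckerEight_of_mod_four_eq_one h], hone, gaussSign, if_pos h]
    simp
  · have hχ : ZMod.χ₈' d * ZMod.χ₈ d = -1 := by
      have hχ₈' : ZMod.χ₈' d = ZMod.χ₄ d * ZMod.χ₈ d := mod_cast ZMod.χ₈'_int_eq_χ₄_mul_χ₈ d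
      rw [hχ₈', ZMod.χ₄_nat_three_mod_four h, mul_assoc, hone, mul_one]
    rw [dft_of_χ_mul_jacobiSym hd hsq dft_χ₈'
      fun n ↦ by rw [hΦ, kroneckerEight_of_mod_four_eq_three h], hχ, gaussSign, if_neg (by omega)]
    simp

end KroneckerEight

section PolyaVinogradov

theorem two_mul_mul_one_sub_le_sin_pi_mul {x : ℝ} (h0 : 0 ≤ x) (h1 : x ≤ 1) :
    2 * x * (1 - x) ≤ Real.sin (π * x) := by
  wlog h : x ≤ 1 / 2 generalizing x
  · have := this (x := 1 - x) (by linarith) (by linarith) (by linarith)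
    rw [show π * (1 - x) = π - π * x by ring, Real.sin_pi_sub] at this
    linarith
  · have hsin := Real.mul_le_sin (x := π * x) (by positivity) (by nlinarith [Real.pi_pos])
    have hcancel : 2 / π * (π * x) = 2 * x := by field_simp
    nlinarith

variable {q : ℕ} [NeZero q]

theorem mul_le_norm_stdAddChar_sub_one (k : ZMod q) :
    4 * (k.val / q) * (1 - k.val / q) ≤ ‖(ZMod.stdAddChar k : ℂ) - 1‖ := by
  have hq : (0 : ℝ) < q := Nat.cast_pos.2 (NeZero.pos q)
  have hlt : (k.val : ℝ) / q ≤ 1 := (div_le_one hq).2 (Nat.cast_le.2 (ZMod.val_lt k).le)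
  have hnorm := Complex.norm_exp_I_mul_ofReal_sub_one (2 * π * (k.val / q))
  rw [show 2 * π * (k.val / q : ℝ) / 2 = π * (k.val / q) by ring] at hnorm
  rw [ZMod.stdAddChar_apply, ZMod.toCircle_apply, show 2 * π * I * k.val / q =
    I * ((2 * π * (k.val / q) : ℝ) : ℂ) by push_cast; ring, hnorm, norm_mul, Real.norm_ofNat]
  have hsin := two_mul_mul_one_sub_le_sin_pi_mul (x := k.val / q) (by positivity) hlt
  have := le_abs_self (Real.sin (π * (k.val / q)))
  rw [Real.norm_eq_abs]
  linarith

theorem norm_sum_stdAddChar_mul_le {k : ZMod q} (hk : k ≠ 0) (Y : ℕ) :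
    ‖∑ n ∈ Finset.range Y, (ZMod.stdAddChar ((n : ZMod q) * k) : ℂ)‖ ≤
      q / 2 * ((k.val : ℝ)⁻¹ + ((-k).val : ℝ)⁻¹) := by
  have hq : (0 : ℝ) < q := Nat.cast_pos.2 (NeZero.pos q)
  have hk0 : (0 : ℝ) < k.val := Nat.cast_pos.2 (Nat.pos_of_ne_zero ((ZMod.val_ne_zero k).2 hk))
  have hkq : (0 : ℝ) < q - k.val := sub_pos.2 (Nat.cast_lt.2 (ZMod.val_lt k))
  have hneg : ((-k).val : ℝ) = q - k.val := by
    rw [ZMod.neg_val, if_neg hk, Nat.cast_sub (ZMod.val_lt k).le]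
  set z : ℂ := ZMod.stdAddChar k
  have hpow (n : ℕ) : ZMod.stdAddChar ((n : ZMod q) * k) = z ^ n := by
    rw [← nsmul_eq_mul, AddChar.map_nsmul_eq_pow]
  have hlower : 4 * (k.val / q) * (1 - k.val / q) ≤ ‖z - 1‖ := mul_le_norm_stdAddChar_sub_one k
  have hpos : 0 < 4 * (k.val / q : ℝ) * (1 - k.val / q) := by
    rw [one_sub_div hq.ne']
    positivity
  have hz : z ≠ 1 := sub_ne_zero.1 (norm_pos_iff.1 (hpos.trans_le hlower))
  have hnum : ‖z ^ Y - 1‖ ≤ 2 := by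
    refine (norm_sub_le _ _).trans ?_
    rw [norm_pow, AddChar.norm_apply, one_pow, norm_one]
    norm_num
  simp only [hpow]
  rw [geom_sum_eq hz, norm_div, hneg]
  calc ‖z ^ Y - 1‖ / ‖z - 1‖ ≤ 2 / (4 * (k.val / q) * (1 - k.val / q)) := by gcongr
    _ = q / 2 * ((k.val : ℝ)⁻¹ + (q - k.val : ℝ)⁻¹) := by
      field_simp
      ring

theorem sum_inv_val_le : ∑ k : ZMod q, (k.val : ℝ)⁻¹ ≤ 1 + Real.log q := by
  obtain ⟨m, rfl⟩ : ∃ m, q = m + 1 := Nat.exists_eq_succ_of_ne_zero (NeZero.ne q)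
  have hsum : ∑ k : ZMod (m + 1), (k.val : ℝ)⁻¹ = (harmonic m : ℝ) := by
    refine (Fin.sum_univ_eq_sum_range (fun i ↦ (i : ℝ)⁻¹) (m + 1)).trans ?_
    rw [Finset.sum_range_succ', harmonic]
    push_cast
    simp
  have hmono : (harmonic m : ℝ) ≤ harmonic (m + 1) := by
    rw [harmonic_succ]
    push_cast
    exact le_add_of_nonneg_right (by positivity)
  rw [hsum]
  exact hmono.trans (harmonic_le_one_add_log _)

/-- The Pólya–Vinogradov argument. In the sum over frequencies `k`, the term `k = 0` contributes
`0⁻¹ = 0` to both sides. -/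
theorem norm_sum_range_le_of_dft {Φ : ZMod q → ℂ} {B : ℝ} (h0 : 𝓕 Φ 0 = 0)
    (hB : ∀ k, ‖𝓕 Φ k‖ ≤ B) (Y : ℕ) :
    ‖∑ n ∈ Finset.range Y, Φ n‖ ≤ B * (1 + Real.log q) := by
  have hq : (0 : ℝ) < q := Nat.cast_pos.2 (NeZero.pos q)
  have hB0 : 0 ≤ B := (norm_nonneg _).trans (hB 0)
  have hinv (j : ZMod q) : Φ j = (q : ℂ)⁻¹ * ∑ k, 𝓕 Φ k * ZMod.stdAddChar (j * k) := by
    have := ZMod.invDFT_apply (𝓕 Φ) j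
    rw [LinearEquiv.symm_apply_apply] at this
    simpa only [smul_eq_mul, mul_comm] using this
  have hterm (k : ZMod q) :
      ‖𝓕 Φ k * ∑ n ∈ Finset.range Y, (ZMod.stdAddChar ((n : ZMod q) * k) : ℂ)‖ ≤
        B * (q / 2 * ((k.val : ℝ)⁻¹ + ((-k).val : ℝ)⁻¹)) := by
    rw [norm_mul]
    rcases eq_or_ne k 0 with rfl | hk
    · rw [h0, norm_zero, zero_mul]
      positivity
    · gcongr
      · exact hB k
      · exact norm_sum_stdAddChar_mul_le hk Y
  have hsymm : ∑ k : ZMod q, ((-k).val : ℝ)⁻¹ = ∑ k : ZMod q, (k.val : ℝ)⁻¹ :=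
    Equiv.sum_comp (Equiv.neg (ZMod q)) fun k : ZMod q ↦ (k.val : ℝ)⁻¹
  calc ‖∑ n ∈ Finset.range Y, Φ n‖
      = ‖(q : ℂ)⁻¹ * ∑ k, 𝓕 Φ k * ∑ n ∈ Finset.range Y, ZMod.stdAddChar ((n : ZMod q) * k)‖ := by
        simp only [hinv, ← Finset.mul_sum]
        rw [Finset.sum_comm]
        simp only [Finset.mul_sum]
    _ ≤ (q : ℝ)⁻¹ * ∑ k : ZMod q, B * (q / 2 * ((k.val : ℝ)⁻¹ + ((-k).val : ℝ)⁻¹)) := by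
        rw [norm_mul, norm_inv, Complex.norm_natCast]
        gcongr
        exact norm_sum_le_of_le _ fun k _ ↦ hterm k
    _ = B * ∑ k : ZMod q, (k.val : ℝ)⁻¹ := by
        simp only [← Finset.mul_sum, Finset.sum_add_distrib, hsymm]
        field_simp
        ring
    _ ≤ B * (1 + Real.log q) := by gcongr; exact sum_inv_val_le

theorem abs_sum_jacobiSym_le {k : ℕ} (hk : Odd k) (hsq : Squarefree k) (hk1 : k ≠ 1) (Y : ℕ) :
    |∑ n ∈ Finset.range Y, (jacobiSym n k : ℝ)| ≤ √k * (1 + Real.log k) := by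
  have : NeZero k := ⟨hk.pos.ne'⟩
  have hdft := dft_jacobiChar hk hsq
  have h0 : 𝓕 (jacobiChar k : ZMod k → ℂ) 0 = 0 := by
    have : Fact (1 < k) := ⟨lt_of_le_of_ne hk.pos hk1.symm⟩
    rw [hdft, Pi.smul_apply, MulChar.map_zero, smul_zero]
  have hB (j : ZMod k) : ‖𝓕 (jacobiChar k : ZMod k → ℂ) j‖ ≤ √k := by
    have hsign : ‖gaussSign k‖ = 1 := by
      rw [gaussSign]
      split_ifs <;> simp
    rw [hdft, Pi.smul_apply, norm_smul, norm_mul, hsign, one_mul, Complex.norm_real,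
      Real.norm_of_nonneg (Real.sqrt_nonneg _)]
    exact mul_le_of_le_one_right (Real.sqrt_nonneg _) (DirichletCharacter.norm_le_one _ j)
  have hsum : ∑ n ∈ Finset.range Y, jacobiChar k n =
      ((∑ n ∈ Finset.range Y, (jacobiSym n k : ℝ) : ℝ) : ℂ) := by
    simp only [jacobiChar_natCast]
    push_cast
    rfl
  rw [← Real.norm_eq_abs, ← Complex.norm_real, ← hsum]
  exact norm_sum_range_le_of_dft h0 hB Y

end PolyaVinogradov

section JacobiSums

open scoped ArithmeticFunction.Moebius

theorem sum_moebius_divisors_filter_dvd (n : ℕ) {m : ℕ} (hm : m ≠ 0) :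
    ∑ e ∈ m.divisors with e ∣ n, μ e = if n.Coprime m then 1 else 0 := by
  have hgcd : m.divisors.filter (· ∣ n) = (n.gcd m).divisors := by
    ext e
    simp only [Finset.mem_filter, Nat.mem_divisors, Nat.dvd_gcd_iff, ne_eq,
      Nat.gcd_ne_zero_right hm, hm, not_false_eq_true, and_true]
    exact and_comm
  have hζμ := congrArg (fun f ↦ f (n.gcd m)) ArithmeticFunction.coe_zeta_mul_moebius
  simp only [ArithmeticFunction.coe_zeta_mul_apply] at hζμ
  rw [hgcd, hζμ, ArithmeticFunction.one_apply]

theorem sum_range_filter_dvd {M : Type*} [AddCommMonoid M] {e : ℕ} (he : 0 < e) (Y : ℕ)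
    (f : ℕ → M) :
    ∑ n ∈ Finset.range Y with e ∣ n, f n = ∑ n ∈ Finset.range (Y ⌈/⌉ e), f (e * n) := by
  have hlt (n : ℕ) : e * n < Y ↔ n < Y ⌈/⌉ e :=
    lt_iff_lt_of_le_iff_le (ceilDiv_le_iff_le_mul he).symm
  have himage : {n ∈ Finset.range Y | e ∣ n} = (Finset.range (Y ⌈/⌉ e)).image (e * ·) := by
    ext n
    simp only [Finset.mem_filter, Finset.mem_range, Finset.mem_image]
    constructor
    · rintro ⟨hn, m, rfl⟩
      exact ⟨m, (hlt m).1 hn, rfl⟩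
    · rintro ⟨m, hm, rfl⟩
      exact ⟨(hlt m).2 hm, dvd_mul_right e m⟩
  rw [himage, Finset.sum_image fun _ _ _ _ h ↦ Nat.eq_of_mul_eq_mul_left he h]

theorem sum_coprime_jacobiSym_eq (k : ℕ) {m : ℕ} (hm : m ≠ 0) (Y : ℕ) :
    ∑ n ∈ Finset.range Y with n.Coprime m, jacobiSym n k =
      ∑ e ∈ m.divisors, μ e * jacobiSym e k * ∑ n ∈ Finset.range (Y ⌈/⌉ e), jacobiSym n k := by
  have hmult : ∀ e ∈ m.divisors,
      μ e * jacobiSym e k * ∑ n ∈ Finset.range (Y ⌈/⌉ e), jacobiSym n k =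
        ∑ n ∈ Finset.range Y, if e ∣ n then μ e * jacobiSym n k else 0 := by
    intro e he
    rw [← Finset.sum_filter, sum_range_filter_dvd (Nat.pos_of_mem_divisors he), Finset.mul_sum]
    refine Finset.sum_congr rfl fun n _ ↦ ?_
    rw [Nat.cast_mul, jacobiSym.mul_left, mul_assoc]
  rw [Finset.sum_congr rfl hmult, Finset.sum_comm, Finset.sum_filter]
  refine Finset.sum_congr rfl fun n _ ↦ ?_
  rw [← Finset.sum_filter, ← Finset.sum_mul, sum_moebius_divisors_filter_dvd n hm, ite_mul,
    one_mul, zero_mul]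

theorem abs_jacobiSym_le_one (a : ℤ) (b : ℕ) : |(jacobiSym a b : ℝ)| ≤ 1 := by
  rcases jacobiSym.trichotomy a b with h | h | h <;> simp [h]

theorem abs_sum_coprime_jacobiSym_le {k : ℕ} (hk : Odd k) (hsq : Squarefree k) (hk1 : k ≠ 1)
    {m : ℕ} (hm : m ≠ 0) (Y : ℕ) :
    |∑ n ∈ Finset.range Y with n.Coprime m, (jacobiSym n k : ℝ)| ≤
      m * (√k * (1 + Real.log k)) := by
  have hterm : ∀ e ∈ m.divisors,
      |μ e * jacobiSym e k * ∑ n ∈ Finset.range (Y ⌈/⌉ e), (jacobiSym n k : ℝ)| ≤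
        √k * (1 + Real.log k) := by
    intro e _
    have hμ : |(μ e : ℝ)| ≤ 1 := mod_cast ArithmeticFunction.abs_moebius_le_one (n := e)
    rw [abs_mul, abs_mul]
    exact (mul_le_of_le_one_left (abs_nonneg _)
      (mul_le_one₀ hμ (abs_nonneg _) (abs_jacobiSym_le_one _ _))).trans
      (abs_sum_jacobiSym_le hk hsq hk1 _)
  have : 0 ≤ Real.log k := Real.log_natCast_nonneg k
  have hcard : (m.divisors.card : ℝ) ≤ m := mod_cast Nat.card_divisors_le_self m
  have hsum := congrArg (Int.cast : ℤ → ℝ) (sum_coprime_jacobiSym_eq k hm Y)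
  push_cast at hsum
  rw [hsum]
  calc _ ≤ m.divisors.card • (√k * (1 + Real.log k)) :=
        (Finset.abs_sum_le_sum_abs _ _).trans (Finset.sum_le_card_nsmul _ _ _ hterm)
    _ ≤ m * (√k * (1 + Real.log k)) := by
        rw [nsmul_eq_mul]
        gcongr

theorem jacobiSym_sq_mul (n : ℕ) {l k : ℕ} (hl : l ≠ 0) (hk : k ≠ 0) :
    jacobiSym n (l ^ 2 * k) = if n.Coprime l then jacobiSym n k else 0 := by
  rw [jacobiSym.mul_right' _ (by positivity) hk, jacobiSym.pow_right]
  split_ifs with h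
  · rw [jacobiSym.sq_one (by simpa using h), one_mul]
  · rw [jacobiSym.eq_zero_iff.2 ⟨hl, by simpa using h⟩, zero_pow two_ne_zero, zero_mul]

theorem abs_sum_odd_jacobiSym_le {n : ℕ} (hn : Odd n) (hns : ¬IsSquare n) (Y : ℕ) :
    |∑ d ∈ Finset.range Y with Odd d, (jacobiSym d n : ℝ)| ≤ 2 * √n * (1 + Real.log n) := by
  obtain ⟨k, l, hk, hl, rfl, hsq⟩ := Nat.sq_mul_squarefree_of_pos hn.pos
  have hkodd : Odd k := (Nat.odd_mul.1 hn).2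
  have hk1 : k ≠ 1 := by
    rintro rfl
    exact hns ⟨l, by ring⟩
  have hcop : ∑ d ∈ Finset.range Y with Odd d, (jacobiSym d (l ^ 2 * k) : ℝ) =
      ∑ d ∈ Finset.range Y with d.Coprime (2 * l), (jacobiSym d k : ℝ) := by
    simp only [Finset.sum_filter, jacobiSym_sq_mul _ hl.ne' hk.ne', Nat.coprime_mul_iff_right,
      Nat.coprime_two_right, ite_and]
    refine Finset.sum_congr rfl fun d _ ↦ ?_
    split_ifs <;> simp
  have hlog : Real.log k ≤ Real.log (l ^ 2 * k : ℕ) :=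
    Real.log_le_log (Nat.cast_pos.2 hk) (Nat.cast_le.2 (Nat.le_mul_of_pos_left k (by positivity)))
  have hsqrt : √(l ^ 2 * k : ℕ) = l * √k := by
    rw [Nat.cast_mul, Nat.cast_pow, Real.sqrt_mul (by positivity), Real.sqrt_sq (by positivity)]
  rw [hcop, hsqrt]
  calc _ ≤ (2 * l : ℕ) * (√k * (1 + Real.log k)) :=
        abs_sum_coprime_jacobiSym_le hkodd hsq hk1 (by positivity) Y
    _ ≤ 2 * (l : ℝ) * (√k * (1 + Real.log (l ^ 2 * k : ℕ))) := by
        rw [Nat.cast_mul, Nat.cast_ofNat]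
        gcongr
    _ = _ := by ring

theorem one_add_log_le {x ε : ℝ} (hx : 1 ≤ x) (hε : 0 < ε) :
    1 + Real.log x ≤ (1 + 1 / ε) * x ^ ε := by
  have hlog := Real.log_le_rpow_div (zero_le_one.trans hx) hε
  have hone := Real.one_le_rpow hx hε.le
  linear_combination hlog + hone

theorem abs_sum_odd_kroneckerEight_le {ε : ℝ} (hε : 0 < ε) {n : ℕ} (hn : Odd n)
    (hns : ¬IsSquare n) (Y : ℕ) :
    |∑ d ∈ Finset.range Y with Odd d, (kroneckerEight d n : ℝ)| ≤
      2 * (1 + 1 / ε) * (n : ℝ) ^ (1 / 2 + ε) := by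
  have hn1 : (1 : ℝ) ≤ n := Nat.one_le_cast.2 hn.pos
  simp only [kroneckerEight, if_pos hn, jacobiSym.mul_left, Int.cast_mul, ← Finset.mul_sum]
  rw [abs_mul]
  calc _ ≤ |∑ d ∈ Finset.range Y with Odd d, (jacobiSym d n : ℝ)| :=
        mul_le_of_le_one_left (abs_nonneg _) (abs_jacobiSym_le_one _ _)
    _ ≤ 2 * √n * (1 + Real.log n) := abs_sum_odd_jacobiSym_le hn hns Y
    _ ≤ 2 * √n * ((1 + 1 / ε) * (n : ℝ) ^ ε) := by gcongr; exact one_add_log_le hn1 hε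
    _ = 2 * (1 + 1 / ε) * (n : ℝ) ^ (1 / 2 + ε) := by
        rw [Real.rpow_add (by linarith), ← Real.sqrt_eq_rpow]
        ring

end JacobiSums

section SummationTools

theorem abs_sum_mul_le_of_monotone {a w : ℕ → ℝ} {S : ℝ} {N : ℕ}
    (hS : ∀ Y ≤ N + 1, |∑ i ∈ Finset.range Y, a i| ≤ S) (hw : Monotone w) (hw0 : 0 ≤ w 0) :
    |∑ i ∈ Finset.range (N + 1), a i * w i| ≤ 2 * S * w N := by
  have hS0 : 0 ≤ S := (abs_nonneg _).trans (hS 0 (Nat.zero_le _))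
  have hwN : 0 ≤ w N := hw0.trans (hw (Nat.zero_le N))
  have hparts := Finset.sum_range_by_parts w a (N + 1)
  simp only [smul_eq_mul, Nat.add_sub_cancel] at hparts
  have hboundary : |w N * ∑ i ∈ Finset.range (N + 1), a i| ≤ S * w N := by
    rw [abs_mul, abs_of_nonneg hwN, mul_comm]
    exact mul_le_mul_of_nonneg_right (hS _ le_rfl) hwN
  have hvariation : |∑ i ∈ Finset.range N, (w (i + 1) - w i) * ∑ j ∈ Finset.range (i + 1), a j| ≤
      S * (w N - w 0) := by
    refine (Finset.abs_sum_le_sum_abs _ _).trans ?_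
    rw [← Finset.sum_range_sub, Finset.mul_sum]
    refine Finset.sum_le_sum fun i hi ↦ ?_
    have hi : i < N := Finset.mem_range.1 hi
    have hincr : 0 ≤ w (i + 1) - w i := sub_nonneg.2 (hw i.le_succ)
    rw [abs_mul, abs_of_nonneg hincr, mul_comm]
    exact mul_le_mul_of_nonneg_right (hS _ (by omega)) hincr
  simp_rw [mul_comm (a _)]
  rw [hparts]
  refine (abs_sub _ _).trans ?_
  nlinarith [mul_nonneg hS0 hw0]

theorem abs_sum_mul_exp_neg_div_le {a : ℕ → ℝ} (ha : a 0 = 0) {S c : ℝ} (hc : 0 ≤ c) {X : ℕ}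
    (hS : ∀ Y ≤ X + 1, |∑ d ∈ Finset.range Y, a d| ≤ S) :
    |∑ d ∈ Finset.range (X + 1), a d * Real.exp (-(c / d))| ≤ 2 * S * Real.exp (-(c / X)) := by
  have hS0 : 0 ≤ S := (abs_nonneg _).trans (hS 0 (Nat.zero_le _))
  rcases X with - | N
  · simpa only [zero_add, Finset.sum_range_one, ha, zero_mul, abs_zero] using by positivity
  have hshift : ∀ Y ≤ N + 1, |∑ i ∈ Finset.range Y, a (i + 1)| ≤ S := fun Y hY ↦ by
    simpa only [Finset.sum_range_succ', ha, add_zero] using hS (Y + 1) (by omega)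
  have hmono : Monotone fun i : ℕ ↦ Real.exp (-(c / ((i + 1 : ℕ) : ℝ))) := fun i j hij ↦ by
    dsimp only
    gcongr
  simpa only [Finset.sum_range_succ' _ (N + 1), ha, zero_mul, add_zero] using
    abs_sum_mul_le_of_monotone hshift hmono (Real.exp_pos _).le

theorem exp_neg_le_div_rpow {A y : ℝ} (hA : 0 < A) (hy : 0 < y) :
    Real.exp (-y) ≤ (A / y) ^ A := by
  have hle : y / A ≤ Real.exp (y / A) := by linarith [Real.add_one_le_exp (y / A)]
  have hpow := Real.rpow_le_rpow (by positivity) hle hA.le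
  rw [← Real.exp_mul, div_mul_cancel₀ _ hA.ne'] at hpow
  rw [← inv_div, Real.inv_rpow (by positivity), Real.exp_neg]
  exact inv_anti₀ (by positivity) hpow

theorem exists_eq_mul_sq_of_isSquare_mul {n m : ℕ} (h : IsSquare (n * m)) :
    ∃ g a b : ℕ, n = g * a ^ 2 ∧ m = g * b ^ 2 := by
  rcases n.eq_zero_or_pos with rfl | hn
  · exact ⟨m, 0, 1, by simp, by simp⟩
  obtain ⟨u, v, huv, hu, hv⟩ := Nat.exists_coprime n m
  set g := n.gcd m
  have hg : 0 < g := Nat.gcd_pos_of_pos_left _ hn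
  obtain ⟨c, hc⟩ := h
  have hgc : g ^ 2 * (u * v) = c ^ 2 := by
    calc g ^ 2 * (u * v) = (u * g) * (v * g) := by ring
      _ = c ^ 2 := by rw [← hu, ← hv, hc, sq]
  obtain ⟨e, rfl⟩ := (Nat.pow_dvd_pow_iff two_ne_zero).1 ⟨u * v, hgc.symm⟩
  have he : u * v = e ^ 2 :=
    Nat.eq_of_mul_eq_mul_left (pow_pos hg 2) (by rw [hgc, mul_pow])
  obtain ⟨a, ha⟩ := exists_eq_pow_of_mul_eq_pow (Nat.isUnit_iff.2 huv) he
  obtain ⟨b, hb⟩ := exists_eq_pow_of_mul_eq_pow (Nat.isUnit_iff.2 huv.symm)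
    ((mul_comm v u).trans he)
  exact ⟨g, a, b, by rw [← ha, mul_comm, ← hu], by rw [← hb, mul_comm, ← hv]⟩

theorem summable_mul_rpow {B : ℝ} (hB : 1 < B) :
    Summable fun p : ℕ × ℕ ↦ ((p.1 * p.2 : ℕ) : ℝ) ^ (-B) := by
  have hone : Summable fun n : ℕ ↦ (n : ℝ) ^ (-B) := Real.summable_nat_rpow.2 (by linarith)
  refine (hone.mul_of_nonneg hone (fun _ ↦ by positivity) (fun _ ↦ by positivity)).congr fun p ↦ ?_
  push_cast
  rw [Real.mul_rpow (by positivity) (by positivity)]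

theorem summable_isSquare_mul_rpow {A : ℝ} (hA : 1 / 2 < A) :
    Summable ({p : ℕ × ℕ | IsSquare (p.1 * p.2)}.indicator
      fun p ↦ ((p.1 * p.2 : ℕ) : ℝ) ^ (-A)) := by
  rw [← summable_subtype_iff_indicator]
  choose! g a b hn hm using
    fun (p : ℕ × ℕ) (hp : IsSquare (p.1 * p.2)) ↦ exists_eq_mul_sq_of_isSquare_mul hp
  let ψ (p : {p : ℕ × ℕ | IsSquare (p.1 * p.2)}) : ℕ × (ℕ × ℕ) := (g p, a p, b p)
  have hψ : Function.Injective ψ := fun p q hpq ↦ by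
    simp only [ψ, Prod.mk.injEq] at hpq
    refine Subtype.ext (Prod.ext ?_ ?_)
    · rw [hn p p.2, hn q q.2, hpq.1, hpq.2.1]
    · rw [hm p p.2, hm q q.2, hpq.1, hpq.2.2]
  have hone : Summable fun n : ℕ ↦ (n : ℝ) ^ (-(2 * A)) := Real.summable_nat_rpow.2 (by linarith)
  have htriple := hone.mul_of_nonneg (summable_mul_rpow (B := 2 * A) (by linarith))
    (fun _ ↦ by positivity) (fun _ ↦ by dsimp only [Pi.zero_apply]; positivity)
  refine (htriple.comp_injective hψ).congr fun p ↦ ?_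
  have hprod : p.1.1 * p.1.2 = (g p * (a p * b p)) ^ 2 :=
    (congrArg₂ (· * ·) (hn p p.2) (hm p p.2)).trans (by ring)
  simp only [Function.comp_apply, ψ, hprod]
  rw [← Real.mul_rpow (by positivity) (by positivity), neg_mul_eq_mul_neg, Real.rpow_mul
    (by positivity), ← Nat.cast_mul, Real.rpow_two, Nat.cast_pow]

end SummationTools

section MeanSquare

theorem kroneckerEight_mul (d n m : ℕ) :
    kroneckerEight d (n * m) = kroneckerEight d n * kroneckerEight d m := by
  simp only [kroneckerEight, Nat.odd_mul]
  by_cases hn : Odd n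
  · by_cases hm : Odd m
    · rw [if_pos ⟨hn, hm⟩, if_pos hn, if_pos hm, jacobiSym.mul_right' _ hn.pos.ne' hm.pos.ne']
    · rw [if_neg fun h ↦ hm h.2, if_neg hm, mul_zero]
  · rw [if_neg fun h ↦ hn h.1, if_neg hn, zero_mul]

theorem kroneckerEight_zero (d : ℕ) : kroneckerEight d 0 = 0 := by simp [kroneckerEight]

theorem abs_kroneckerEight_le_one (d n : ℕ) : |(kroneckerEight d n : ℝ)| ≤ 1 := by
  rw [kroneckerEight]
  split_ifs
  · exact abs_jacobiSym_le_one _ _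
  · simp

/-- The theta series of `χ_{8d}`, over positive `n` only and normalised so that its symmetry is
`x ↦ 1 / x`. -/
def kroneckerTheta (d : ℕ) (x : ℝ) : ℝ :=
  ∑' n : ℕ, kroneckerEight d n * Real.exp (-π * n ^ 2 * x / (8 * d))

theorem summable_norm_kroneckerTheta {d : ℕ} (hd : 0 < d) {x : ℝ} (hx : 0 < x) :
    Summable fun n : ℕ ↦ ‖kroneckerEight d n * Real.exp (-π * n ^ 2 * x / (8 * d))‖ := by
  have hτ : 0 < ((x / (8 * d) : ℝ) : ℂ).re := by rw [ofReal_re]; positivity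
  refine Summable.of_nonneg_of_le (fun _ ↦ norm_nonneg _) (fun n ↦ ?_)
    ((summable_exp_neg_pi_mul_sq hτ).norm.comp_injective (Nat.cast_injective (R := ℤ)))
  rw [Function.comp_apply, norm_exp_neg_pi_mul_sq, ofReal_re, norm_mul, Real.norm_eq_abs,
    Real.norm_of_nonneg (Real.exp_pos _).le,
    show -π * n ^ 2 * x / (8 * d) = -π * (x / (8 * d)) * ((n : ℤ) : ℝ) ^ 2 by push_cast; ring]
  exact mul_le_of_le_one_left (Real.exp_pos _).le (abs_kroneckerEight_le_one d n)

theorem abs_sum_odd_kroneckerEight_mul_exp_le (n X : ℕ) {c : ℝ} (hc : 0 ≤ c) :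
    |∑ d ∈ Finset.range (X + 1) with Odd d, kroneckerEight d n * Real.exp (-(c / d))| ≤
      2 * (X + 1) * Real.exp (-(c / X)) := by
  simp_rw [Finset.sum_filter, ← ite_zero_mul]
  refine abs_sum_mul_exp_neg_div_le (by simp) hc fun Y hY ↦ ?_
  rw [← Finset.sum_filter]
  refine (Finset.abs_sum_le_sum_abs _ _).trans ?_
  calc _ ≤ ∑ d ∈ Finset.range Y with Odd d, (1 : ℝ) :=
        Finset.sum_le_sum fun d _ ↦ abs_kroneckerEight_le_one d n
    _ ≤ X + 1 := by
      rw [Finset.sum_const, nsmul_one]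
      exact_mod_cast (Finset.card_filter_le _ _).trans ((Finset.card_range Y).trans_le hY)

theorem abs_sum_odd_kroneckerEight_mul_exp_le_of_not_isSquare {ε : ℝ} (hε : 0 < ε) {n : ℕ}
    (hn : Odd n) (hns : ¬IsSquare n) (X : ℕ) {c : ℝ} (hc : 0 ≤ c) :
    |∑ d ∈ Finset.range (X + 1) with Odd d, kroneckerEight d n * Real.exp (-(c / d))| ≤
      2 * (2 * (1 + 1 / ε) * (n : ℝ) ^ (1 / 2 + ε)) * Real.exp (-(c / X)) := by
  simp_rw [Finset.sum_filter, ← ite_zero_mul]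
  refine abs_sum_mul_exp_neg_div_le (by simp) hc fun Y _ ↦ ?_
  rw [← Finset.sum_filter]
  exact abs_sum_odd_kroneckerEight_le hε hn hns Y

theorem exp_neg_sq_add_sq_le {A x X : ℝ} (hA : 0 < A) (hx : 0 < x) (hX : 0 < X) {n m : ℕ}
    (hn : 0 < n) (hm : 0 < m) :
    Real.exp (-(π * (n ^ 2 + m ^ 2) * x / 8 / X)) ≤
      (4 * A / π) ^ A * ((n * m : ℕ) : ℝ) ^ (-A) * (X / x) ^ A := by
  have hM : (0 : ℝ) < (n * m : ℕ) := by exact_mod_cast Nat.mul_pos hn hm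
  have hle : π / 4 * ((n * m : ℕ) * (x / X)) ≤ π * (n ^ 2 + m ^ 2) * x / 8 / X := by
    have hamgm : (2 : ℝ) * n * m ≤ n ^ 2 + m ^ 2 := two_mul_le_add_sq _ _
    calc π / 4 * ((n * m : ℕ) * (x / X)) = π * x / (8 * X) * (2 * n * m) := by
          push_cast; field_simp; ring
      _ ≤ π * x / (8 * X) * (n ^ 2 + m ^ 2) := by gcongr
      _ = π * (n ^ 2 + m ^ 2) * x / 8 / X := by field_simp
  calc Real.exp (-(π * (n ^ 2 + m ^ 2) * x / 8 / X))
      ≤ Real.exp (-(π / 4 * ((n * m : ℕ) * (x / X)))) := by gcongr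
    _ ≤ (A / (π / 4 * ((n * m : ℕ) * (x / X)))) ^ A := exp_neg_le_div_rpow hA (by positivity)
    _ = (4 * A / π * ((n * m : ℕ) : ℝ)⁻¹ * (X / x)) ^ A := by congr 1; field_simp
    _ = _ := by
      rw [Real.mul_rpow (by positivity) (by positivity),
        Real.mul_rpow (by positivity) (by positivity), Real.inv_rpow hM.le, Real.rpow_neg hM.le]

/-- Majorant, up to a factor `X * (X / x) ^ A`, of the `(n, m)` term of the mean square of
`kroneckerTheta`: the first part comes from the pairs with `n * m` a square, on which there is no
cancellation, the second from all others. -/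
def pairMajorant (A : ℝ) (p : ℕ × ℕ) : ℝ :=
  {p : ℕ × ℕ | IsSquare (p.1 * p.2)}.indicator (fun p ↦ ((p.1 * p.2 : ℕ) : ℝ) ^ (-A)) p +
    ((p.1 * p.2 : ℕ) : ℝ) ^ (-(3 / 4 + A / 2))

theorem summable_pairMajorant {A : ℝ} (hA : 1 / 2 < A) : Summable (pairMajorant A) :=
  (summable_isSquare_mul_rpow hA).add (summable_mul_rpow (by linarith))

theorem pairMajorant_nonneg (A : ℝ) (p : ℕ × ℕ) : 0 ≤ pairMajorant A p :=
  add_nonneg (Set.indicator_nonneg (fun _ _ ↦ by positivity) p) (by positivity)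

theorem rpow_neg_le_pairMajorant (A : ℝ) {n m : ℕ} (h : IsSquare (n * m)) :
    ((n * m : ℕ) : ℝ) ^ (-A) ≤ pairMajorant A (n, m) := by
  rw [pairMajorant, Set.indicator_of_mem (s := {p : ℕ × ℕ | IsSquare (p.1 * p.2)}) h]
  exact le_add_of_nonneg_right (by positivity)

theorem rpow_le_pairMajorant (A : ℝ) (n m : ℕ) :
    ((n * m : ℕ) : ℝ) ^ (-(3 / 4 + A / 2)) ≤ pairMajorant A (n, m) :=
  le_add_of_nonneg_left (Set.indicator_nonneg (fun _ _ ↦ by positivity) _)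

theorem abs_pair_sum_le_of_isSquare {A x : ℝ} (hA : 0 < A) (hx : 0 < x) {X n m : ℕ}
    (hX : 1 ≤ X) (hn : 0 < n) (hm : 0 < m) (hsq : IsSquare (n * m)) :
    |∑ d ∈ Finset.range (X + 1) with Odd d,
        kroneckerEight d (n * m) * Real.exp (-(π * (n ^ 2 + m ^ 2) * x / 8 / d))| ≤
      4 * (4 * A / π) ^ A * (X * (X / x) ^ A) * pairMajorant A (n, m) := by
  have hX' : (1 : ℝ) ≤ X := Nat.one_le_cast.2 hX
  calc _ ≤ 2 * (X + 1) * Real.exp (-(π * (n ^ 2 + m ^ 2) * x / 8 / X)) :=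
        abs_sum_odd_kroneckerEight_mul_exp_le _ X (by positivity)
    _ ≤ 4 * X * ((4 * A / π) ^ A * ((n * m : ℕ) : ℝ) ^ (-A) * (X / x) ^ A) :=
      mul_le_mul (by linarith) (exp_neg_sq_add_sq_le hA hx (by positivity) hn hm)
        (Real.exp_pos _).le (by positivity)
    _ = 4 * (4 * A / π) ^ A * (X * (X / x) ^ A) * ((n * m : ℕ) : ℝ) ^ (-A) := by ring
    _ ≤ _ := by gcongr; exact rpow_neg_le_pairMajorant A hsq

theorem abs_pair_sum_le_of_not_isSquare {A x : ℝ} (hA : 1 / 2 < A) (hx : 1 ≤ x) {X n m : ℕ}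
    (hX : 1 ≤ X) (hnm : Odd (n * m)) (hsq : ¬IsSquare (n * m)) :
    |∑ d ∈ Finset.range (X + 1) with Odd d,
        kroneckerEight d (n * m) * Real.exp (-(π * (n ^ 2 + m ^ 2) * x / 8 / d))| ≤
      4 * (1 + 1 / ((A - 1 / 2) / 2)) * (4 * (1 + A) / π) ^ (1 + A) * (X * (X / x) ^ A) *
        pairMajorant A (n, m) := by
  have hX0 : (0 : ℝ) < X := by exact_mod_cast hX
  have hn : 0 < n := Nat.pos_of_mul_pos_right hnm.pos
  have hm : 0 < m := Nat.pos_of_mul_pos_left hnm.pos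
  set M : ℝ := ((n * m : ℕ) : ℝ)
  have hM : 0 < M := Nat.cast_pos.2 hnm.pos
  set ε : ℝ := (A - 1 / 2) / 2 with hε
  have hε0 : 0 < ε := by linarith
  set K : ℝ := (4 * (1 + A) / π) ^ (1 + A)
  have hXx : (X / x : ℝ) ^ (1 + A) ≤ X * (X / x) ^ A := by
    rw [Real.rpow_add (by positivity), Real.rpow_one]
    gcongr
    exact div_le_self hX0.le hx
  calc _ ≤ 2 * (2 * (1 + 1 / ε) * M ^ (1 / 2 + ε)) *
          Real.exp (-(π * (n ^ 2 + m ^ 2) * x / 8 / X)) :=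
        abs_sum_odd_kroneckerEight_mul_exp_le_of_not_isSquare hε0 hnm hsq X (by positivity)
    _ ≤ 2 * (2 * (1 + 1 / ε) * M ^ (1 / 2 + ε)) *
          (K * M ^ (-(1 + A)) * (X * (X / x) ^ A)) := by
      gcongr
      refine (exp_neg_sq_add_sq_le (A := 1 + A) (by linarith) (zero_lt_one.trans_le hx) hX0 hn
        hm).trans ?_
      gcongr
    _ = 4 * (1 + 1 / ε) * K * (X * (X / x) ^ A) * (M ^ (1 / 2 + ε) * M ^ (-(1 + A))) := by ring
    _ = 4 * (1 + 1 / ε) * K * (X * (X / x) ^ A) * M ^ (-(3 / 4 + A / 2)) := by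
      rw [← Real.rpow_add hM, hε]
      ring_nf
    _ ≤ _ := by gcongr; exact rpow_le_pairMajorant A n m

theorem exists_pair_sum_le {A : ℝ} (hA : 1 / 2 < A) :
    ∃ K : ℝ, 0 < K ∧ ∀ X : ℕ, 1 ≤ X → ∀ x : ℝ, 1 ≤ x → ∀ n m : ℕ,
      ∑ d ∈ Finset.range (X + 1) with Odd d,
          (kroneckerEight d n * Real.exp (-π * n ^ 2 * x / (8 * d))) *
            (kroneckerEight d m * Real.exp (-π * m ^ 2 * x / (8 * d))) ≤
        K * (X * (X / x) ^ A) * pairMajorant A (n, m) := by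
  refine ⟨max (4 * (4 * A / π) ^ A)
    (4 * (1 + 1 / ((A - 1 / 2) / 2)) * (4 * (1 + A) / π) ^ (1 + A)),
    lt_max_of_lt_left (by positivity), fun X hX x hx n m ↦ ?_⟩
  have hmaj := pairMajorant_nonneg A (n, m)
  have hterm : ∀ d : ℕ, (kroneckerEight d n * Real.exp (-π * n ^ 2 * x / (8 * d))) *
      (kroneckerEight d m * Real.exp (-π * m ^ 2 * x / (8 * d))) =
      kroneckerEight d (n * m) * Real.exp (-(π * (n ^ 2 + m ^ 2) * x / 8 / d)) := fun d ↦ by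
    rw [mul_mul_mul_comm, ← Real.exp_add, kroneckerEight_mul]
    push_cast
    ring_nf
  simp_rw [hterm]
  by_cases hnm : Odd (n * m)
  · refine (le_abs_self _).trans ?_
    by_cases hsq : IsSquare (n * m)
    · refine (abs_pair_sum_le_of_isSquare (one_half_pos.trans hA) (zero_lt_one.trans_le hx) hX
        (Nat.pos_of_mul_pos_right hnm.pos) (Nat.pos_of_mul_pos_left hnm.pos) hsq).trans ?_
      gcongr
      exact le_max_left _ _
    · refine (abs_pair_sum_le_of_not_isSquare hA hx hX hnm hsq).trans ?_
      gcongr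
      exact le_max_right _ _
  · simp only [kroneckerEight, if_neg hnm, Int.cast_zero, zero_mul, Finset.sum_const_zero]
    positivity

theorem exists_sum_kroneckerTheta_sq_le {A : ℝ} (hA : 1 / 2 < A) :
    ∃ C : ℝ, 0 < C ∧ ∀ X : ℕ, 1 ≤ X → ∀ x : ℝ, 1 ≤ x →
      ∑ d ∈ Finset.range (X + 1) with Odd d, kroneckerTheta d x ^ 2 ≤ C * (X * (X / x) ^ A) := by
  obtain ⟨K, hK, hpair⟩ := exists_pair_sum_le hA
  have hmaj : 0 ≤ ∑' p, pairMajorant A p := tsum_nonneg (pairMajorant_nonneg A)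
  refine ⟨K * (∑' p, pairMajorant A p) + 1, by positivity, fun X hX x hx ↦ ?_⟩
  have hsq : ∀ d ∈ (Finset.range (X + 1)).filter Odd, HasSum (fun p : ℕ × ℕ ↦
      (kroneckerEight d p.1 * Real.exp (-π * p.1 ^ 2 * x / (8 * d))) *
        (kroneckerEight d p.2 * Real.exp (-π * p.2 ^ 2 * x / (8 * d))))
      (kroneckerTheta d x ^ 2) := fun d hd ↦ by
    have hsum := summable_norm_kroneckerTheta (Finset.mem_filter.1 hd).2.pos
      (zero_lt_one.trans_le hx)
    rw [sq, kroneckerTheta, tsum_mul_tsum_of_summable_norm hsum hsum]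
    exact (summable_mul_of_summable_norm hsum hsum).hasSum
  have hle := hasSum_le (fun p : ℕ × ℕ ↦ hpair X hX x hx p.1 p.2) (hasSum_sum hsq)
    ((summable_pairMajorant hA).hasSum.mul_left (K * (X * (X / x) ^ A)))
  have hXx : 0 ≤ (X : ℝ) * (X / x) ^ A := by positivity
  linarith

theorem exists_sum_abs_kroneckerTheta_le {A : ℝ} (hA : 1 / 2 < A) :
    ∃ C : ℝ, 0 < C ∧ ∀ X : ℕ, 1 ≤ X → ∀ x : ℝ, 1 ≤ x →
      ∑ d ∈ Finset.range (X + 1) with Odd d, |kroneckerTheta d x| ≤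
        C * (X * (X / x) ^ (A / 2)) := by
  obtain ⟨C, hC, hmean⟩ := exists_sum_kroneckerTheta_sq_le hA
  refine ⟨√(2 * C), by positivity, fun X hX x hx ↦ ?_⟩
  have hX' : (1 : ℝ) ≤ X := Nat.one_le_cast.2 hX
  have hcard : (((Finset.range (X + 1)).filter Odd).card : ℝ) ≤ 2 * X := by
    have : (((Finset.range (X + 1)).filter Odd).card : ℝ) ≤ (X + 1 : ℕ) :=
      Nat.cast_le.2 ((Finset.card_filter_le _ _).trans_eq (Finset.card_range _))
    push_cast at this
    linarith
  refine abs_le_of_sq_le_sq' ?_ (by positivity) |>.2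
  calc (∑ d ∈ Finset.range (X + 1) with Odd d, |kroneckerTheta d x|) ^ 2
      ≤ ((Finset.range (X + 1)).filter Odd).card *
          ∑ d ∈ Finset.range (X + 1) with Odd d, |kroneckerTheta d x| ^ 2 :=
        sq_sum_le_card_mul_sum_sq
    _ ≤ 2 * X * (C * (X * (X / x) ^ A)) := by
      simp only [sq_abs]
      exact mul_le_mul hcard (hmean X hX x hx) (Finset.sum_nonneg fun _ _ ↦ sq_nonneg _)
        (by positivity)
    _ = (√(2 * C) * (X * (X / x) ^ (A / 2))) ^ 2 := by
      rw [mul_pow, mul_pow, Real.sq_sqrt (by positivity), ← Real.rpow_mul_natCast (by positivity),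
        Nat.cast_ofNat, div_mul_cancel₀ A two_ne_zero]
      ring

end MeanSquare

section SelfDual

theorem zmodTheta_const_smul {N : ℕ} (c : ℂ) (Φ : ZMod N → ℂ) (τ : ℂ) :
    zmodTheta (c • Φ) τ = c * zmodTheta Φ τ := by
  simp only [zmodTheta, Pi.smul_apply, smul_eq_mul, mul_assoc, tsum_mul_left]

variable {N : ℕ} [NeZero N] {Φ : ZMod N → ℂ}

theorem even_of_dft_eq_sqrt_smul (hΦ : 𝓕 Φ = (√N : ℂ) • Φ) : Φ.Even := by
  have hN : (N : ℂ) ≠ 0 := NeZero.ne _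
  have hsqrt : (√N : ℂ) * √N = N := by
    rw [← ofReal_mul, Real.mul_self_sqrt N.cast_nonneg, ofReal_natCast]
  intro j
  have hdft := congrFun (ZMod.dft_dft Φ) j
  rw [hΦ, ZMod.dft_const_smul, hΦ, smul_smul, hsqrt] at hdft
  exact (smul_right_injective ℂ hN hdft).symm

theorem sum_eq_zero_of_dft_eq_sqrt_smul (hΦ : 𝓕 Φ = (√N : ℂ) • Φ) (hΦ₀ : Φ 0 = 0) :
    ∑ j, Φ j = 0 := by
  rw [← ZMod.dft_apply_zero, hΦ, Pi.smul_apply, hΦ₀, smul_zero]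

theorem zmodTheta_one_div_div (hΦ : 𝓕 Φ = (√N : ℂ) • Φ) {x : ℝ} (hx : 0 < x) :
    zmodTheta Φ ((1 / x : ℝ) / N) = (x ^ (1 / 2 : ℝ) : ℝ) * zmodTheta Φ (x / N) := by
  have hN : (0 : ℝ) < N := Nat.cast_pos.2 (NeZero.pos N)
  have hNc : (N : ℂ) ≠ 0 := NeZero.ne _
  have hxc : (x : ℂ) ≠ 0 := ofReal_ne_zero.2 hx.ne'
  have hre : 0 < (((1 / x : ℝ) : ℂ) / N).re := by
    rw [← ofReal_natCast, ← ofReal_div, ofReal_re]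
    positivity
  have hdual : 1 / (N ^ 2 * (((1 / x : ℝ) : ℂ) / N)) = x / N := by
    push_cast
    field_simp
  have hcoeff : 1 / (N * (((1 / x : ℝ) : ℂ) / N) ^ (1 / 2 : ℂ)) * (√N : ℂ) =
      ((x ^ (1 / 2 : ℝ) : ℝ) : ℂ) := by
    have hhalf : (1 / 2 : ℂ) = ((1 / 2 : ℝ) : ℂ) := by norm_num
    rw [hhalf, ← ofReal_natCast, ← ofReal_div, ← ofReal_cpow (by positivity), ← ofReal_mul,
      ← ofReal_one, ← ofReal_div, ← ofReal_mul, ← Real.sqrt_eq_rpow, ← Real.sqrt_eq_rpow,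
      div_div, one_div (x * N), Real.sqrt_inv, Real.sqrt_mul hx.le]
    congr 1
    field_simp
    rw [Real.sq_sqrt hN.le]
  rw [zmodTheta_eq_dft Φ hre, hΦ, zmodTheta_const_smul, hdual, ← mul_assoc, hcoeff]

theorem zmodTheta_div_sq_eq_sum_evenKernel (Φ : ZMod N → ℂ) {t : ℝ} (ht : 0 < t) :
    zmodTheta Φ (t / N ^ 2) =
      ∑ j, Φ j * HurwitzZeta.evenKernel (ZMod.toAddCircle j) t := by
  have hN : (N : ℂ) ≠ 0 := NeZero.ne _
  have hre : 0 < ((t : ℂ) / N ^ 2).re := by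
    have := NeZero.pos N
    rw [← ofReal_natCast, ← ofReal_pow, ← ofReal_div, ofReal_re]
    positivity
  rw [zmodTheta, tsum_int_eq_sum_zmod (N := N) (summable_zmodTheta Φ hre)]
  refine Finset.sum_congr rfl fun j _ ↦ ?_
  have hker := hasSum_ofReal.2 (HurwitzZeta.hasSum_int_evenKernel (j.val / N) ht)
  rw [← ZMod.natCast_zmod_val j, ZMod.toAddCircle_natCast, ZMod.natCast_zmod_val,
    ← hker.tsum_eq, ← tsum_mul_left]
  refine tsum_congr fun m ↦ ?_
  push_cast
  rw [ZMod.natCast_zmod_val, ZMod.natCast_self, zero_mul, add_zero]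
  congr 2
  field_simp
  ring

theorem zmodTheta_div_eq_sum_evenKernel (Φ : ZMod N → ℂ) {x : ℝ} (hx : 0 < x) :
    zmodTheta Φ (x / N) =
      ∑ j, Φ j * HurwitzZeta.evenKernel (ZMod.toAddCircle j) (N * x) := by
  have hN : (N : ℂ) ≠ 0 := NeZero.ne _
  rw [← zmodTheta_div_sq_eq_sum_evenKernel Φ (mul_pos (Nat.cast_pos.2 (NeZero.pos N)) hx)]
  congr 1
  push_cast
  field_simp

theorem continuousOn_zmodTheta_div (Φ : ZMod N → ℂ) :
    ContinuousOn (fun x : ℝ ↦ zmodTheta Φ (x / N)) (Set.Ioi 0) := by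
  refine ContinuousOn.congr (continuousOn_finsetSum _ fun j _ ↦ ?_)
    fun x hx ↦ zmodTheta_div_eq_sum_evenKernel Φ hx
  refine continuousOn_const.mul (continuous_ofReal.comp_continuousOn
    ((HurwitzZeta.continuousOn_evenKernel _).comp (by fun_prop) fun x hx ↦ ?_))
  exact mul_pos (Nat.cast_pos.2 (NeZero.pos N)) (Set.mem_Ioi.1 hx)

theorem isBigO_zmodTheta_div (hΦ₀ : Φ 0 = 0) (r : ℝ) :
    (fun x : ℝ ↦ zmodTheta Φ (x / N)) =O[atTop] fun x ↦ x ^ r := by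
  have hN : (0 : ℝ) < N := Nat.cast_pos.2 (NeZero.pos N)
  refine Asymptotics.IsBigO.congr' (Asymptotics.IsBigO.fun_sum (s := Finset.univ) fun j _ ↦ ?_)
    (eventually_gt_atTop 0 |>.mono fun x hx ↦ (zmodTheta_div_eq_sum_evenKernel Φ hx).symm)
    EventuallyEq.rfl
  rcases eq_or_ne j 0 with rfl | hj
  · simpa only [hΦ₀, zero_mul] using Asymptotics.isBigO_zero _ _
  obtain ⟨p, hp, hker⟩ := HurwitzZeta.isBigO_atTop_evenKernel_sub (ZMod.toAddCircle j)
  simp only [ZMod.toAddCircle_eq_zero, hj, if_false, sub_zero] at hker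
  have hexp := (hker.comp_tendsto (tendsto_id.const_mul_atTop hN)).trans_isLittleO
    ((isLittleO_exp_neg_mul_rpow_atTop (mul_pos hp hN) r).congr_left fun x ↦ by
      simp only [Function.comp_apply, id_eq]; ring_nf)
  refine Asymptotics.IsBigO.const_mul_left (Asymptotics.IsBigO.of_norm_left ?_) _
  simpa only [norm_real, Function.comp_def, id_eq] using hexp.isBigO.norm_left

/-- The symmetry `x ↦ 1 / x` of the theta series of a self-dual `Φ`, packaged for its Mellin
transform. -/
def selfDualFEPair (hΦ : 𝓕 Φ = (√N : ℂ) • Φ) (hΦ₀ : Φ 0 = 0) : WeakFEPair ℂ where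
  f x := zmodTheta Φ (x / N)
  g x := zmodTheta Φ (x / N)
  k := 1 / 2
  ε := 1
  f₀ := 0
  g₀ := 0
  hf_int := (continuousOn_zmodTheta_div Φ).locallyIntegrableOn measurableSet_Ioi
  hg_int := (continuousOn_zmodTheta_div Φ).locallyIntegrableOn measurableSet_Ioi
  hk := one_half_pos
  hε := one_ne_zero
  h_feq x hx := by rw [zmodTheta_one_div_div hΦ hx, one_mul, smul_eq_mul]
  hf_top r := by simpa only [sub_zero] using isBigO_zmodTheta_div hΦ₀ r
  hg_top r := by simpa only [sub_zero] using isBigO_zmodTheta_div hΦ₀ r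

theorem isStrongFEPair_selfDualFEPair (hΦ : 𝓕 Φ = (√N : ℂ) • Φ) (hΦ₀ : Φ 0 = 0) :
    IsStrongFEPair (selfDualFEPair hΦ hΦ₀) := ⟨rfl, rfl⟩

theorem mellinConvergent_zmodTheta_div (hΦ : 𝓕 Φ = (√N : ℂ) • Φ) (hΦ₀ : Φ 0 = 0) (u : ℂ) :
    MellinConvergent (fun x : ℝ ↦ zmodTheta Φ (x / N)) u :=
  ((isStrongFEPair_selfDualFEPair hΦ hΦ₀).hasMellin u).1

theorem differentiable_mellin_zmodTheta_div (hΦ : 𝓕 Φ = (√N : ℂ) • Φ) (hΦ₀ : Φ 0 = 0) :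
    Differentiable ℂ (mellin fun x : ℝ ↦ zmodTheta Φ (x / N)) := by
  have hstrong := isStrongFEPair_selfDualFEPair hΦ hΦ₀
  have hdiff := hstrong.differentiable_Λ
  rwa [hstrong.Λ_eq] at hdiff

theorem hasSum_nat_zmodTheta (heven : Φ.Even) (hΦ₀ : Φ 0 = 0) {τ : ℂ} (hτ : 0 < τ.re) :
    HasSum (fun n : ℕ ↦ Φ n * cexp (-π * τ * n ^ 2)) (zmodTheta Φ τ / 2) := by
  let f (n : ℤ) : ℂ := Φ n * cexp (-π * τ * n ^ 2)
  have hf : Function.Even f := fun n ↦ by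
    simp only [f, Int.cast_neg, heven (n : ZMod N), neg_sq]
  have hnat : HasSum (fun n : ℕ ↦ f n) (∑' n : ℕ, f n) :=
    ((summable_zmodTheta Φ hτ).comp_injective Nat.cast_injective).hasSum
  have hint := hnat.of_nat_of_neg (g' := ∑' n : ℕ, f n) (by simpa only [hf _] using hnat)
  have htwo : zmodTheta Φ τ = 2 * ∑' n : ℕ, f n := by
    have hf₀ : f 0 = 0 := by simp only [f, Int.cast_zero, hΦ₀, zero_mul]
    rw [zmodTheta, hint.tsum_eq, hf₀, sub_zero, two_mul]
  rw [htwo, mul_div_cancel_left₀ _ two_ne_zero]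
  simpa only [f, Int.cast_natCast] using hnat

theorem mellin_zmodTheta (heven : Φ.Even) (hΦ₀ : Φ 0 = 0) {s : ℂ} (hs : 1 < s.re) :
    mellin (fun t : ℝ ↦ zmodTheta Φ t / 2) (s / 2) = Gammaℝ s * ZMod.LFunction Φ s := by
  obtain ⟨C, hC⟩ := exists_norm_le_of_zmod Φ
  have hsum := hasSum_mellin_pi_mul_sq (ι := ℕ) (a := fun n ↦ Φ n) (r := fun n ↦ (n : ℝ))
    (F := fun t ↦ zmodTheta Φ t / 2) (s := s) (by linarith) (fun t ht ↦ ?_) ?_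
  · rw [← hsum.tsum_eq, ZMod.LFunction_eq_LSeries Φ hs, LSeries, ← tsum_mul_left]
    refine tsum_congr fun n ↦ ?_
    rw [LSeries.term_def₀ (by rwa [Nat.cast_zero]), mul_div_assoc, Nat.abs_cast, ofReal_natCast,
      cpow_neg, div_eq_mul_inv]
  · have ht' : 0 < (t : ℂ).re := ht
    refine (hasSum_nat_zmodTheta heven hΦ₀ ht').congr_fun fun n ↦ ?_
    rcases eq_or_ne n 0 with rfl | hn
    · simp only [Nat.cast_zero, if_true, hΦ₀, zero_mul]
    · rw [if_neg (Nat.cast_ne_zero.2 hn)]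
      push_cast
      ring_nf
  · refine .of_nonneg_of_le (fun n ↦ by positivity) (fun n ↦ ?_)
      ((Real.summable_one_div_nat_rpow.2 hs).mul_left C)
    rw [Nat.abs_cast, mul_one_div]
    gcongr
    exact hC _

theorem mellin_zmodTheta_div_of_one_lt_re (heven : Φ.Even) (hΦ₀ : Φ 0 = 0) {s : ℂ}
    (hs : 1 < s.re) :
    mellin (fun x : ℝ ↦ zmodTheta Φ (x / N)) (s / 2) =
      2 * N ^ (s / 2) * ZMod.completedLFunction Φ s := by
  have hN : (0 : ℝ) < N := Nat.cast_pos.2 (NeZero.pos N)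
  have hΓ : Gammaℝ s ≠ 0 := Gammaℝ_ne_zero_of_re_pos (by linarith)
  have hscale := mellin_comp_mul_left (fun t : ℝ ↦ zmodTheta Φ t / 2) (s / 2) (inv_pos.2 hN)
  rw [mellin_zmodTheta heven hΦ₀ hs, mellin_div_const,
    ZMod.LFunction_eq_completed_div_gammaFactor_even heven s (.inr hΦ₀),
    mul_div_cancel₀ _ hΓ] at hscale
  simp only [ofReal_mul, ofReal_inv, ofReal_natCast, smul_eq_mul] at hscale
  rw [inv_cpow_eq_ite, if_neg (by rw [natCast_arg]; exact Real.pi_pos.ne), cpow_neg, inv_inv]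
    at hscale
  simp only [div_eq_inv_mul (ofReal _)]
  linear_combination 2 * hscale

theorem mellin_zmodTheta_div (hΦ : 𝓕 Φ = (√N : ℂ) • Φ) (hΦ₀ : Φ 0 = 0) (s : ℂ) :
    mellin (fun x : ℝ ↦ zmodTheta Φ (x / N)) (s / 2) =
      2 * N ^ (s / 2) * ZMod.completedLFunction Φ s := by
  have hN : (N : ℂ) ≠ 0 := NeZero.ne _
  have heven := even_of_dft_eq_sqrt_smul hΦ
  have hleft : Differentiable ℂ fun s : ℂ ↦
      mellin (fun x : ℝ ↦ zmodTheta Φ (x / N)) (s / 2) :=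
    (differentiable_mellin_zmodTheta_div hΦ hΦ₀).comp (by fun_prop)
  have hright : Differentiable ℂ fun s : ℂ ↦
      2 * (N : ℂ) ^ (s / 2) * ZMod.completedLFunction Φ s := by
    refine .mul (.const_mul (fun s ↦ ?_) 2) (ZMod.differentiable_completedLFunction hΦ₀
      (sum_eq_zero_of_dft_eq_sqrt_smul hΦ hΦ₀))
    exact DifferentiableAt.const_cpow (by fun_prop) (.inl hN)
  have hhalfPlane : ∀ᶠ s : ℂ in 𝓝 2, 1 < s.re :=
    (isOpen_lt continuous_const continuous_re).mem_nhds (by simp)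
  exact congrFun (AnalyticOnNhd.eq_of_eventuallyEq (fun z _ ↦ hleft.analyticAt z)
    (fun z _ ↦ hright.analyticAt z)
    (hhalfPlane.mono fun z hz ↦ mellin_zmodTheta_div_of_one_lt_re heven hΦ₀ hz)) s

theorem completedLFunction_one_sub_of_dft_eq (hΦ : 𝓕 Φ = (√N : ℂ) • Φ) (hΦ₀ : Φ 0 = 0) (s : ℂ) :
    ZMod.completedLFunction Φ (1 - s) = N ^ (s - 1 / 2) * ZMod.completedLFunction Φ s := by
  have hN : (N : ℂ) ≠ 0 := NeZero.ne _
  have hsqrt : (√N : ℂ) = N ^ (1 / 2 : ℂ) := by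
    rw [Real.sqrt_eq_rpow, ofReal_cpow N.cast_nonneg]
    norm_num
  rw [ZMod.completedLFunction_one_sub_even (even_of_dft_eq_sqrt_smul hΦ) s
    (.inr (sum_eq_zero_of_dft_eq_sqrt_smul hΦ hΦ₀)) (.inr hΦ₀), hΦ, hsqrt]
  have hsmul := ZMod.completedLFunction_const_mul (N ^ (1 / 2 : ℂ)) Φ s
  rw [show (N ^ (1 / 2 : ℂ) : ℂ) • Φ = fun j ↦ (N : ℂ) ^ (1 / 2 : ℂ) * Φ j from rfl, hsmul,
    ← mul_assoc, ← cpow_add _ _ hN]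
  ring_nf

end SelfDual

section KroneckerMoments

open MeasureTheory

theorem kroneckerEight_mod {d : ℕ} (hd : Odd d) (n : ℕ) :
    kroneckerEight d (n % (8 * d)) = kroneckerEight d n := by
  have hmod8 : ((n % (8 * d) : ℕ) : ZMod 8) = n :=
    (ZMod.natCast_eq_natCast_iff _ _ _).2 ((Nat.mod_modEq n _).of_dvd (dvd_mul_right 8 d))
  have hjac : jacobiSym ((n % (8 * d) : ℕ) : ℤ) d = jacobiSym n d :=
    jacobiSym.mod_left' (Int.natCast_modEq_iff.2 ((Nat.mod_modEq n _).of_dvd (dvd_mul_left d 8)))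
  rcases Nat.odd_mod_four_iff.1 (Nat.odd_iff.1 hd) with h | h
  · simp only [kroneckerEight_of_mod_four_eq_one h, hmod8, hjac]
  · simp only [kroneckerEight_of_mod_four_eq_three h, hmod8, hjac]

theorem exists_zmod_kroneckerEight {d : ℕ} (hd : Odd d) :
    ∃ Φ : ZMod (8 * d) → ℂ, ∀ n : ℕ, Φ n = kroneckerEight d n :=
  ⟨fun j ↦ kroneckerEight d j.val, fun n ↦ by simp only [ZMod.val_natCast, kroneckerEight_mod hd]⟩

theorem eq_zero_of_kroneckerEight {d : ℕ} {Φ : ZMod (8 * d) → ℂ}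
    (hΦ : ∀ n : ℕ, Φ n = kroneckerEight d n) : Φ 0 = 0 := by
  simpa only [Nat.cast_zero, kroneckerEight_zero, Int.cast_zero] using hΦ 0

section

variable {d : ℕ} [NeZero d] (hd : Odd d) (hsq : Squarefree d) {Φ : ZMod (8 * d) → ℂ}
  (hΦ : ∀ n : ℕ, Φ n = kroneckerEight d n)
include hd hsq hΦ

theorem zmodTheta_div_eq_kroneckerTheta {x : ℝ} (hx : 0 < x) :
    zmodTheta Φ (x / (8 * d : ℕ)) = 2 * kroneckerTheta d x := by
  have hre : 0 < ((x : ℂ) / (8 * d : ℕ)).re := by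
    rw [← ofReal_natCast, ← ofReal_div, ofReal_re]
    exact div_pos hx (Nat.cast_pos.2 (NeZero.pos _))
  have hnat := hasSum_nat_zmodTheta
    (even_of_dft_eq_sqrt_smul (dft_eq_sqrt_smul_of_kroneckerEight hd hsq hΦ))
    (eq_zero_of_kroneckerEight hΦ) hre
  suffices zmodTheta Φ (x / (8 * d : ℕ)) / 2 = kroneckerTheta d x by linear_combination 2 * this
  rw [← hnat.tsum_eq, kroneckerTheta, ofReal_tsum]
  refine tsum_congr fun n ↦ ?_
  rw [hΦ]
  push_cast
  ring_nf

theorem mellin_kroneckerTheta (s : ℂ) :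
    mellin (fun x ↦ (kroneckerTheta d x : ℂ)) (s / 2) =
      (8 * d : ℕ) ^ (s / 2) * ZMod.completedLFunction Φ s := by
  have hmellin := mellin_zmodTheta_div (dft_eq_sqrt_smul_of_kroneckerEight hd hsq hΦ)
    (eq_zero_of_kroneckerEight hΦ) s
  have hcongr : mellin (fun x : ℝ ↦ zmodTheta Φ (x / (8 * d : ℕ))) (s / 2) =
      mellin (fun x ↦ (2 : ℂ) • (kroneckerTheta d x : ℂ)) (s / 2) :=
    setIntegral_congr_fun measurableSet_Ioi fun x hx ↦ by
      simp only [zmodTheta_div_eq_kroneckerTheta hd hsq hΦ hx, smul_eq_mul]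
  rw [hcongr, mellin_const_smul, smul_eq_mul, mul_assoc] at hmellin
  exact mul_left_cancel₀ two_ne_zero hmellin

end

theorem kroneckerTheta_one_div {d : ℕ} (hd : Odd d) (hsq : Squarefree d) {x : ℝ} (hx : 0 < x) :
    kroneckerTheta d (1 / x) = x ^ (1 / 2 : ℝ) * kroneckerTheta d x := by
  have : NeZero d := ⟨hd.pos.ne'⟩
  obtain ⟨Φ, hΦ⟩ := exists_zmod_kroneckerEight hd
  have hinv := zmodTheta_one_div_div (dft_eq_sqrt_smul_of_kroneckerEight hd hsq hΦ) hx
  rw [zmodTheta_div_eq_kroneckerTheta hd hsq hΦ (one_div_pos.2 hx),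
    zmodTheta_div_eq_kroneckerTheta hd hsq hΦ hx] at hinv
  have hinvC : (kroneckerTheta d (1 / x) : ℂ) = (x ^ (1 / 2 : ℝ) : ℝ) * kroneckerTheta d x := by
    linear_combination hinv / 2
  exact_mod_cast hinvC

theorem norm_cpow_smul_kroneckerTheta (d : ℕ) (s : ℂ) {x : ℝ} (hx : 0 < x) :
    ‖(x : ℂ) ^ (s / 2 - 1) • (kroneckerTheta d x : ℂ)‖ =
      |kroneckerTheta d x| * x ^ (s.re / 2 - 1) := by
  rw [norm_smul, norm_cpow_eq_rpow_re_of_pos hx, norm_real, Real.norm_eq_abs, mul_comm, sub_re,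
    one_re, div_ofNat_re]

theorem integrableOn_abs_kroneckerTheta_mul_rpow {d : ℕ} (hd : Odd d) (hsq : Squarefree d)
    (σ : ℝ) :
    IntegrableOn (fun x ↦ |kroneckerTheta d x| * x ^ (σ / 2 - 1)) (Set.Ioi 0) := by
  have : NeZero d := ⟨hd.pos.ne'⟩
  obtain ⟨Φ, hΦ⟩ := exists_zmod_kroneckerEight hd
  have hconv := (mellinConvergent_zmodTheta_div (dft_eq_sqrt_smul_of_kroneckerEight hd hsq hΦ)
    (eq_zero_of_kroneckerEight hΦ) ((σ : ℂ) / 2)).norm.div_const 2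
  refine IntegrableOn.congr_fun hconv (fun x hx ↦ ?_) measurableSet_Ioi
  rw [← ofReal_re σ, ← norm_cpow_smul_kroneckerTheta d σ hx]
  simp only [zmodTheta_div_eq_kroneckerTheta hd hsq hΦ hx, norm_smul, norm_mul, norm_ofNat,
    ofReal_re]
  ring

/-- The absolute Mellin moment `∫₀^∞ |θ_d(x)| x^(σ/2 - 1) dx` of the theta series of `χ_{8d}`,
which dominates `|L(s, χ_{8d})|` on the line `Re s = σ`. -/
def kroneckerThetaMoment (σ : ℝ) (d : ℕ) : ℝ :=
  ∫ x in Set.Ioi (0 : ℝ), |kroneckerTheta d x| * x ^ (σ / 2 - 1)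

theorem kroneckerThetaMoment_nonneg (σ : ℝ) (d : ℕ) : 0 ≤ kroneckerThetaMoment σ d :=
  setIntegral_nonneg measurableSet_Ioi fun _ hx ↦
    mul_nonneg (abs_nonneg _) (Real.rpow_nonneg (Set.mem_Ioi.1 hx).le _)

theorem norm_LFunction_le {d : ℕ} [NeZero d] (hd : Odd d) (hsq : Squarefree d)
    {Φ : ZMod (8 * d) → ℂ} (hΦ : ∀ n : ℕ, Φ n = kroneckerEight d n) (s : ℂ) :
    ‖ZMod.LFunction Φ s‖ ≤
      ((8 * d : ℕ) : ℝ) ^ (-(s.re / 2)) * kroneckerThetaMoment s.re d / ‖Gammaℝ s‖ := by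
  have hself := dft_eq_sqrt_smul_of_kroneckerEight hd hsq hΦ
  have hpos : 0 < 8 * d := NeZero.pos _
  have hmoment : ((8 * d : ℕ) : ℝ) ^ (s.re / 2) * ‖ZMod.completedLFunction Φ s‖ ≤
      kroneckerThetaMoment s.re d := by
    rw [← div_ofNat_re, ← norm_natCast_cpow_of_pos hpos, ← norm_mul,
      ← mellin_kroneckerTheta hd hsq hΦ]
    refine (norm_integral_le_integral_norm _).trans_eq ?_
    exact setIntegral_congr_fun measurableSet_Ioi fun x hx ↦
      norm_cpow_smul_kroneckerTheta d s hx
  rw [ZMod.LFunction_eq_completed_div_gammaFactor_even (even_of_dft_eq_sqrt_smul hself) s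
    (.inr (eq_zero_of_kroneckerEight hΦ)), norm_div, Real.rpow_neg (Nat.cast_nonneg _)]
  gcongr
  rwa [← div_eq_inv_mul, le_div_iff₀' (Real.rpow_pos_of_pos (Nat.cast_pos.2 hpos) _)]

/-- The dependence on `x` of the mean value bound for `|θ_d(x)|`: a power of `x` at infinity,
reflected at `x = 1` by the functional equation of `θ_d`. -/
def thetaMajorant (A x : ℝ) : ℝ := if x ≤ 1 then x ^ ((A - 1) / 2) else x ^ (-(A / 2))

theorem exists_sum_abs_kroneckerTheta_le_thetaMajorant {A : ℝ} (hA : 1 / 2 < A) :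
    ∃ C : ℝ, 0 < C ∧ ∀ X : ℕ, 1 ≤ X → ∀ x : ℝ, 0 < x →
      ∑ d ∈ Finset.range (X + 1) with Odd d ∧ Squarefree d, |kroneckerTheta d x| ≤
        C * X ^ (1 + A / 2) * thetaMajorant A x := by
  obtain ⟨C, hC, hmean⟩ := exists_sum_abs_kroneckerTheta_le hA
  have hlarge (X : ℕ) (hX : 1 ≤ X) (x : ℝ) (hx : 1 ≤ x) :
      ∑ d ∈ Finset.range (X + 1) with Odd d ∧ Squarefree d, |kroneckerTheta d x| ≤
        C * X ^ (1 + A / 2) * x ^ (-(A / 2)) := by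
    have hX₀ : (0 : ℝ) < X := Nat.cast_pos.2 hX
    have hx₀ : 0 < x := zero_lt_one.trans_le hx
    calc _ ≤ ∑ d ∈ Finset.range (X + 1) with Odd d, |kroneckerTheta d x| :=
          Finset.sum_le_sum_of_subset_of_nonneg
            (Finset.monotone_filter_right _ fun _ _ h ↦ h.1) fun _ _ _ ↦ abs_nonneg _
      _ ≤ C * (X * (X / x) ^ (A / 2)) := hmean X hX x hx
      _ = C * X ^ (1 + A / 2) * x ^ (-(A / 2)) := by
        rw [Real.div_rpow hX₀.le hx₀.le, Real.rpow_add hX₀, Real.rpow_one, Real.rpow_neg hx₀.le]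
        ring
  refine ⟨C, hC, fun X hX x hx ↦ ?_⟩
  rw [thetaMajorant]
  split_ifs with hx₁
  · have hinv : ∀ d ∈ (Finset.range (X + 1)).filter fun d ↦ Odd d ∧ Squarefree d,
        |kroneckerTheta d x| = x ^ (-(1 / 2) : ℝ) * |kroneckerTheta d (1 / x)| := fun d hd ↦ by
      obtain ⟨hodd, hsq⟩ := (Finset.mem_filter.1 hd).2
      rw [kroneckerTheta_one_div hodd hsq hx, abs_mul, abs_of_pos (Real.rpow_pos_of_pos hx _),
        ← mul_assoc, ← Real.rpow_add hx, neg_add_cancel, Real.rpow_zero, one_mul]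
    rw [Finset.sum_congr rfl hinv, ← Finset.mul_sum]
    calc _ ≤ x ^ (-(1 / 2) : ℝ) * (C * X ^ (1 + A / 2) * (1 / x) ^ (-(A / 2))) := by
          gcongr
          exact hlarge X hX (1 / x) ((one_le_div hx).2 hx₁)
      _ = C * X ^ (1 + A / 2) * (x ^ (-(1 / 2) : ℝ) * x ^ (A / 2)) := by
        rw [one_div x, Real.inv_rpow hx.le, Real.rpow_neg hx.le (A / 2), inv_inv]
        ring
      _ = C * X ^ (1 + A / 2) * x ^ ((A - 1) / 2) := by
        rw [← Real.rpow_add hx]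
        ring_nf
  · exact hlarge X hX x (not_le.1 hx₁).le

theorem integrableOn_thetaMajorant_mul_rpow {σ A : ℝ} (hA : max σ (1 - σ) < A) :
    IntegrableOn (fun x ↦ thetaMajorant A x * x ^ (σ / 2 - 1)) (Set.Ioi 0) := by
  obtain ⟨hσ, hσ'⟩ := max_lt_iff.1 hA
  rw [← Set.Ioc_union_Ioi_eq_Ioi (zero_le_one' ℝ)]
  refine .union ?_ ?_
  · have hint : IntegrableOn (fun x : ℝ ↦ x ^ ((A - 1) / 2 + (σ / 2 - 1))) (Set.Ioc 0 1) :=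
      (intervalIntegrable_iff_integrableOn_Ioc_of_le zero_le_one).1
        (intervalIntegral.intervalIntegrable_rpow' (by linarith))
    refine hint.congr_fun (fun x hx ↦ ?_) measurableSet_Ioc
    simp only [thetaMajorant, if_pos hx.2, Real.rpow_add hx.1]
  · have hint : IntegrableOn (fun x : ℝ ↦ x ^ (-(A / 2) + (σ / 2 - 1))) (Set.Ioi 1) :=
      integrableOn_Ioi_rpow_of_lt (by linarith) one_pos
    refine hint.congr_fun (fun x hx ↦ ?_) measurableSet_Ioi
    have hx₁ : 1 < x := hx
    simp only [thetaMajorant, if_neg hx₁.not_ge, Real.rpow_add (one_pos.trans hx₁)]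

theorem exists_sum_kroneckerThetaMoment_le {σ A : ℝ} (hA : max σ (1 - σ) < A) :
    ∃ C : ℝ, ∀ X : ℕ, 1 ≤ X →
      ∑ d ∈ Finset.range (X + 1) with Odd d ∧ Squarefree d, kroneckerThetaMoment σ d ≤
        C * X ^ (1 + A / 2) := by
  obtain ⟨hσ, hσ'⟩ := max_lt_iff.1 hA
  obtain ⟨C, -, hmean⟩ := exists_sum_abs_kroneckerTheta_le_thetaMajorant (A := A) (by linarith)
  refine ⟨C * ∫ x in Set.Ioi 0, thetaMajorant A x * x ^ (σ / 2 - 1), fun X hX ↦ ?_⟩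
  have hint : ∀ d ∈ (Finset.range (X + 1)).filter fun d ↦ Odd d ∧ Squarefree d,
      IntegrableOn (fun x ↦ |kroneckerTheta d x| * x ^ (σ / 2 - 1)) (Set.Ioi 0) := fun d hd ↦
    integrableOn_abs_kroneckerTheta_mul_rpow (Finset.mem_filter.1 hd).2.1
      (Finset.mem_filter.1 hd).2.2 σ
  simp only [kroneckerThetaMoment]
  rw [← integral_finsetSum _ hint, mul_right_comm, ← integral_const_mul]
  refine setIntegral_mono_on (integrable_finsetSum _ hint)
    ((integrableOn_thetaMajorant_mul_rpow hA).const_mul _) measurableSet_Ioi fun x hx ↦ ?_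
  have hx₀ : 0 < x := hx
  rw [← Finset.sum_mul, ← mul_assoc]
  gcongr
  exact hmean X hX x hx₀

theorem summable_kroneckerThetaMoment_mul_rpow {σ v : ℝ} (hv : 1 + max σ (1 - σ) / 2 < v) :
    Summable fun d : ℕ ↦
      if Odd d ∧ Squarefree d then kroneckerThetaMoment σ d * (d : ℝ) ^ (-v) else 0 := by
  obtain ⟨A, hσA, hAv⟩ := exists_between (show max σ (1 - σ) < 2 * (v - 1) by linarith)
  obtain ⟨C, hmoment⟩ := exists_sum_kroneckerThetaMoment_le hσA
  have hA : 0 < A := by linarith [max_lt_iff.1 hσA]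
  let f (d : ℕ) : ℂ := if Odd d ∧ Squarefree d then (kroneckerThetaMoment σ d : ℂ) else 0
  have hf (d : ℕ) : ‖f d‖ = if Odd d ∧ Squarefree d then kroneckerThetaMoment σ d else 0 := by
    simp only [f, apply_ite norm, norm_real, norm_zero,
      Real.norm_of_nonneg (kroneckerThetaMoment_nonneg σ d)]
  have hf_summable : LSeriesSummable f v := by
    refine LSeriesSummable_of_sum_norm_bigO (r := 1 + A / 2) ?_ (by linarith)
      (by rw [ofReal_re]; linarith)
    refine .of_bound C (eventually_ge_atTop 1 |>.mono fun X hX ↦ ?_)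
    rw [Real.norm_of_nonneg (Finset.sum_nonneg fun _ _ ↦ norm_nonneg _),
      Real.norm_of_nonneg (by positivity)]
    refine le_trans ?_ (hmoment X hX)
    simp only [Finset.sum_filter, ← hf]
    refine Finset.sum_le_sum_of_subset_of_nonneg (fun d hd ↦ ?_) fun _ _ _ ↦ norm_nonneg _
    exact Finset.mem_range_succ_iff.2 (Finset.mem_Icc.1 hd).2
  refine hf_summable.norm.congr fun d ↦ ?_
  rcases d.eq_zero_or_pos with rfl | hd
  · simp
  · rw [LSeries.norm_term_eq, if_neg hd.ne', hf, ofReal_re, Real.rpow_neg d.cast_nonneg,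
      ite_div, zero_div, div_eq_mul_inv]

end KroneckerMoments

section FunctionalEquation

theorem Gammaℝ_one_sub_ne_zero {s : ℂ} (hs : ∀ k : ℕ, s ≠ 2 * k + 1) : Gammaℝ (1 - s) ≠ 0 := by
  rw [Ne, Gammaℝ_eq_zero_iff]
  rintro ⟨k, hk⟩
  exact hs k (by linear_combination -hk)

theorem Xplus_eq_Gammaℝ_div (s : ℂ) :
    Xplus s = 8 ^ (1 / 2 - s) * (Gammaℝ (1 - s) / Gammaℝ s) := by
  have hπ : (π : ℂ) ≠ 0 := ofReal_ne_zero.2 Real.pi_ne_zero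
  have hdiv : ((π : ℂ) / 8) ^ (s - 1 / 2) = π ^ (s - 1 / 2) * 8 ^ (1 / 2 - s) := by
    have := mul_cpow_ofReal_nonneg Real.pi_pos.le (by norm_num : (0 : ℝ) ≤ 8⁻¹) (s - 1 / 2)
    rw [← neg_sub s, cpow_neg, div_eq_mul_inv]
    push_cast at this
    rw [this, inv_cpow_eq_ite, if_neg]
    rw [show (8 : ℂ) = (8 : ℕ) by norm_num, natCast_arg]
    exact Real.pi_pos.ne
  have hπpow : (π : ℂ) ^ (s - 1 / 2) * π ^ (-s / 2) = π ^ (-(1 - s) / 2) := by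
    rw [← cpow_add _ _ hπ]
    ring_nf
  have : (π : ℂ) ^ (-s / 2) ≠ 0 := cpow_ne_zero_iff.2 (.inl hπ)
  rw [Xplus, Gammaℝ_def, Gammaℝ_def, hdiv, ← hπpow]
  field_simp

/-- The `d`-th term of `A(s, w) = ∑ L(s, χ_d) d^(-w)`, where `d` runs over the odd squarefree
numbers. -/
def doubleSeriesTerm (χ : (d : ℕ) → DirichletCharacter ℂ (8 * d)) (s w : ℂ) (d : ℕ) : ℂ :=
  if h : Odd d ∧ Squarefree d then
    haveI : NeZero d := ⟨h.1.pos.ne'⟩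
    (χ d).LFunction s * (d : ℂ) ^ (-w) else 0

variable {χ : (d : ℕ) → DirichletCharacter ℂ (8 * d)}
  (hχ : ∀ d : ℕ, Odd d → Squarefree d → ∀ n : ℕ, χ d n = kroneckerEight d n)
include hχ

theorem summable_norm_doubleSeriesTerm {s w : ℂ} (hw : max 1 (3 / 2 - s.re) < w.re) :
    Summable fun d ↦ ‖doubleSeriesTerm χ s w d‖ := by
  have hv : 1 + max s.re (1 - s.re) / 2 < s.re / 2 + w.re := by
    rcases max_lt_iff.1 hw with ⟨h₁, h₂⟩
    rcases max_cases s.re (1 - s.re) with h | h <;> linarith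
  refine .of_nonneg_of_le (fun _ ↦ norm_nonneg _) (fun d ↦ ?_)
    ((summable_kroneckerThetaMoment_mul_rpow hv).mul_left (8 ^ (-(s.re / 2)) / ‖Gammaℝ s‖))
  rw [doubleSeriesTerm]
  split_ifs with hd
  · have : NeZero d := ⟨hd.1.pos.ne'⟩
    have hd₀ : (0 : ℝ) < d := Nat.cast_pos.2 hd.1.pos
    calc _ = ‖ZMod.LFunction (χ d) s‖ * (d : ℝ) ^ (-w.re) := by
          rw [norm_mul, norm_natCast_cpow_of_pos hd.1.pos, neg_re, DirichletCharacter.LFunction]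
      _ ≤ ((8 * d : ℕ) : ℝ) ^ (-(s.re / 2)) * kroneckerThetaMoment s.re d / ‖Gammaℝ s‖ *
          (d : ℝ) ^ (-w.re) := by
        gcongr
        exact norm_LFunction_le hd.1 hd.2 (hχ d hd.1 hd.2) s
      _ = _ := by
        rw [Nat.cast_mul, Nat.cast_ofNat, Real.mul_rpow (by norm_num) hd₀.le, neg_add,
          Real.rpow_add hd₀]
        ring
  · rw [norm_zero, mul_zero]

theorem doubleSeriesTerm_eq_Xplus_mul {s : ℂ} (hs : ∀ k : ℕ, s ≠ 2 * k + 1) (w : ℂ) (d : ℕ) :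
    doubleSeriesTerm χ s w d = Xplus s * doubleSeriesTerm χ (1 - s) (s + w - 1 / 2) d := by
  rw [doubleSeriesTerm, doubleSeriesTerm]
  split_ifs with hd
  · have : NeZero d := ⟨hd.1.pos.ne'⟩
    have hd₀ : (d : ℂ) ≠ 0 := NeZero.ne _
    have hΦ := hχ d hd.1 hd.2
    have hself := dft_eq_sqrt_smul_of_kroneckerEight hd.1 hd.2 hΦ
    have hzero := eq_zero_of_kroneckerEight hΦ
    have hL (z : ℂ) : (χ d).LFunction z = ZMod.completedLFunction (χ d) z / Gammaℝ z :=
      ZMod.LFunction_eq_completed_div_gammaFactor_even (even_of_dft_eq_sqrt_smul hself) z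
        (.inr hzero)
    have hcond : ((8 * d : ℕ) : ℂ) ^ (s - 1 / 2) = 8 ^ (s - 1 / 2) * (d : ℂ) ^ (s - 1 / 2) := by
      rw [Nat.cast_mul, natCast_mul_natCast_cpow, Nat.cast_ofNat]
    have hpow8 : (8 : ℂ) ^ (1 / 2 - s) * 8 ^ (s - 1 / 2) = 1 := by
      rw [← cpow_add _ _ (by norm_num), sub_add_sub_cancel, sub_self, cpow_zero]
    have hdpow : (d : ℂ) ^ (-w) = (d : ℂ) ^ (s - 1 / 2) * (d : ℂ) ^ (-(s + w - 1 / 2)) := by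
      rw [← cpow_add _ _ hd₀]
      ring_nf
    have hΓ := mul_inv_cancel₀ (Gammaℝ_one_sub_ne_zero hs)
    rw [hL, hL, completedLFunction_one_sub_of_dft_eq hself hzero, hcond, hdpow,
      Xplus_eq_Gammaℝ_div]
    linear_combination (-(ZMod.completedLFunction (χ d) s / Gammaℝ s * d ^ (s - 1 / 2) *
      d ^ (-(s + w - 1 / 2)))) * (hpow8 + 8 ^ (1 / 2 - s) * 8 ^ (s - 1 / 2) * hΓ)
  · rw [mul_zero]

end FunctionalEquation

/-- the functional equation `A(s,w) = X₊(s) A(1-s, s+w-1/2)` for the double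
Dirichlet series `A(s,w) = Σ*_{d odd} L(s,χ_{8d}) d^{-w}`, valid for
`Re w > max(1, 3/2 - Re s)` and `s` not an odd positive integer. -/
theorem statement11
    (χ : (d : ℕ) → DirichletCharacter ℂ (8 * d))
    (hχ : ∀ d : ℕ, Odd d → Squarefree d →
      (∀ n : ℕ, Odd n → χ d (n : ZMod (8 * d)) = ((jacobiSym (8 * d) n : ℤ) : ℂ)) ∧
      (∀ n : ℕ, Even n → χ d (n : ZMod (8 * d)) = 0))
    (s : ℂ) (hs : ∀ k : ℕ, s ≠ 2 * k + 1)
    (w : ℂ) (hw : max 1 (3 / 2 - s.re) < w.re) :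
    Summable (fun d : ℕ => ‖(if h : Odd d ∧ Squarefree d then
        haveI : NeZero (8 * d) := ⟨by rcases h.1 with ⟨k, rfl⟩; omega⟩
        (χ d).LFunction s * (d : ℂ) ^ (-w) else 0)‖) ∧
    Summable (fun d : ℕ => ‖(if h : Odd d ∧ Squarefree d then
        haveI : NeZero (8 * d) := ⟨by rcases h.1 with ⟨k, rfl⟩; omega⟩
        (χ d).LFunction (1 - s) * (d : ℂ) ^ (-(s + w - 1 / 2)) else 0)‖) ∧
    (∑' d : ℕ, if h : Odd d ∧ Squarefree d then
        haveI : NeZero (8 * d) := ⟨by rcases h.1 with ⟨k, rfl⟩; omega⟩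
        (χ d).LFunction s * (d : ℂ) ^ (-w) else 0) =
      Xplus s *
      ∑' d : ℕ, if h : Odd d ∧ Squarefree d then
        haveI : NeZero (8 * d) := ⟨by rcases h.1 with ⟨k, rfl⟩; omega⟩
        (χ d).LFunction (1 - s) * (d : ℂ) ^ (-(s + w - 1 / 2)) else 0 := by
  have hχ' (d : ℕ) (hd : Odd d) (hsq : Squarefree d) (n : ℕ) : χ d n = kroneckerEight d n := by
    rw [kroneckerEight]
    split_ifs with hn
    · exact (hχ d hd hsq).1 n hn
    · rw [(hχ d hd hsq).2 n (Nat.not_odd_iff_even.1 hn), Int.cast_zero]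
  have hw' : max 1 (3 / 2 - (1 - s).re) < (s + w - 1 / 2).re := by
    have hhalf : (1 / 2 : ℂ).re = 1 / 2 := by norm_num
    obtain ⟨h₁, h₂⟩ := max_lt_iff.1 hw
    rw [sub_re, sub_re, add_re, one_re, hhalf]
    exact max_lt (by linarith) (by linarith)
  refine ⟨summable_norm_doubleSeriesTerm hχ' hw, summable_norm_doubleSeriesTerm hχ' hw', ?_⟩
  rw [← tsum_mul_left]
  exact tsum_congr (doubleSeriesTerm_eq_Xplus_mul hχ' hs w)
end
end

section
/- Let s, w ∈ ℂ with Re s > 1 and Re w > 1. Then both series below converge absolutely and Σ_{d odd squarefree ≥ 1} L(s,χ_{8d})·d^{−w} = (1/ζ(2w)) · Σ_{n odd ≥ 1} χ₈(n) · L(w, χ⁽⁴ⁿ⁾) · a_{2w}(4n) · n^{−s}. -/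
open Complex

noncomputable section

/-- `a_t(m) = ∏_{p | m} (1 - p^{-t})^{-1}`. -/
def aF (t : ℂ) (m : ℕ) : ℂ := ∏ p ∈ m.primeFactors, (1 - (p : ℂ) ^ (-t))⁻¹

/-!
For `Re s, Re w > 1` both sides are iterated sums of the absolutely convergent double series
`∑ J(8d | n) d^{-w} n^{-s}`, with `d` odd squarefree and `n` odd. Summing over `n` first gives
`L(s, χ_{8d})`. Summing over `d` first leaves the squarefree part of `L(w, χ⁽⁴ⁿ⁾)`: comparing Euler
factors through `(1 - x)⁻¹ = (1 + x) (1 - x²)⁻¹` gives, for every Dirichlet character `ψ`,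
`L(w, ψ) = (∑_{d squarefree} ψ(d) d^{-w}) L(2w, ψ²)`, and for `ψ = χ⁽⁴ⁿ⁾` the character `ψ²` is
principal, so `L(2w, ψ²) = ζ(2w) / a_{2w}(4n)`.
-/

theorem hasProd_one_add_primes_tsum_squarefree {R : Type*} [NormedCommRing R] [CompleteSpace R]
    {f : ℕ →*₀ R} (hf : Summable (‖f ·‖)) :
    HasProd (fun p : Nat.Primes ↦ 1 + f p) (∑' d : ℕ, if Squarefree d then f d else 0) := by
  set g : ℕ → R := fun d ↦ if Squarefree d then f d else 0 with hg
  have g_one : g 1 = 1 := by simp [hg]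
  have g_mul {m n : ℕ} (hmn : m.Coprime n) : g (m * n) = g m * g n := by
    simp only [hg, Nat.squarefree_mul hmn, map_mul, ite_and, ite_mul, mul_ite, zero_mul, mul_zero]
    split_ifs <;> rfl
  have g_summable : Summable (‖g ·‖) :=
    hf.of_nonneg_of_le (fun _ ↦ norm_nonneg _) fun d ↦ by simp only [hg]; split_ifs <;> simp
  have g_prime_powers (p : Nat.Primes) : ∑' e, g (p ^ e) = 1 + f p := by
    rw [tsum_eq_sum (s := Finset.range 2) fun e he ↦ ?_]
    · simp [Finset.sum_range_succ, hg, p.2.prime.squarefree]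
    · have two_le_e : 2 ≤ e := by simpa [Nat.succ_le_iff] using he
      exact if_neg fun h ↦ by
        have := ((Nat.squarefree_pow_iff p.2.ne_one (by lia)).mp h).2
        lia
  simpa only [g_prime_powers] using
    EulerProduct.eulerProduct_hasProd g_one g_mul g_summable (by simp [hg])

theorem tsum_eq_tsum_squarefree_mul_tsum_sq {F : Type*} [NormedField F] [CompleteSpace F]
    {f : ℕ →*₀ F} (hf : Summable (‖f ·‖)) :
    ∑' n, f n = (∑' d : ℕ, if Squarefree d then f d else 0) * ∑' n, f n ^ 2 := by
  have hf_sq : Summable fun n ↦ ‖f n ^ 2‖ := by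
    simpa only [Function.comp_def, map_pow] using
      hf.comp_injective (Nat.pow_left_injective two_ne_zero)
  have euler_sq : HasProd (fun p : Nat.Primes ↦ (1 - f p ^ 2)⁻¹) (∑' n, f n ^ 2) :=
    EulerProduct.eulerProduct_completely_multiplicative_hasProd
      (f := (powMonoidWithZeroHom two_ne_zero).comp f) hf_sq
  have local_factor (p : Nat.Primes) : (1 + f p) * (1 - f p ^ 2)⁻¹ = (1 - f p)⁻¹ := by
    have norm_lt_one : ‖f p‖ < 1 := hf.of_norm.norm_lt_one (f := f.toMonoidHom) p.2.one_lt
    have one_add_ne_zero : 1 + f p ≠ 0 := fun h ↦ by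
      simp [← neg_eq_of_add_eq_zero_right h] at norm_lt_one
    rw [show 1 - f p ^ 2 = (1 + f p) * (1 - f p) by ring, mul_inv,
      mul_inv_cancel_left₀ one_add_ne_zero]
  refine (EulerProduct.eulerProduct_completely_multiplicative_hasProd hf).unique ?_
  simpa only [local_factor] using (hasProd_one_add_primes_tsum_squarefree hf).mul euler_sq

section LFunction

variable {N : ℕ} [NeZero N] {s : ℂ}

theorem one_lt_re_two_mul (hs : 1 < s.re) : 1 < (2 * s).re := by
  simp only [mul_re, re_ofNat, im_ofNat]
  linarith

theorem LFunction_eq_tsum_mul_cpow (χ : DirichletCharacter ℂ N) (hs : 1 < s.re) :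
    χ.LFunction s = ∑' n : ℕ, χ n * (n : ℂ) ^ (-s) := by
  rw [χ.LFunction_eq_LSeries hs, ← tsum_dirichletSummand χ hs]
  rfl

theorem LFunction_eq_tsum_squarefree_mul_LFunction_sq (χ : DirichletCharacter ℂ N)
    (hs : 1 < s.re) :
    χ.LFunction s = (∑' d : ℕ, if Squarefree d then χ d * (d : ℂ) ^ (-s) else 0) *
      (χ ^ 2).LFunction (2 * s) := by
  have h2s := one_lt_re_two_mul hs
  have summand_sq (n : ℕ) :
      (χ n * (n : ℂ) ^ (-s)) ^ 2 = (χ ^ 2) n * (n : ℂ) ^ (-(2 * s)) := by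
    rw [mul_pow, χ.pow_apply' two_ne_zero, ← cpow_nat_mul, Nat.cast_ofNat, mul_neg]
  rw [LFunction_eq_tsum_mul_cpow χ hs, LFunction_eq_tsum_mul_cpow (χ ^ 2) h2s]
  simp only [← summand_sq]
  exact tsum_eq_tsum_squarefree_mul_tsum_sq (summable_dirichletSummand χ hs)

theorem LFunction_one_mul_aF (hs : 1 < s.re) :
    (1 : DirichletCharacter ℂ N).LFunction s * aF s N = riemannZeta s := by
  have s_ne_one : s ≠ 1 := by rintro rfl; simp at hs
  have local_factors_ne_zero : ∏ p ∈ N.primeFactors, (1 - (p : ℂ) ^ (-s)) ≠ 0 :=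
    Finset.prod_ne_zero_iff.mpr fun p hp ↦
      one_sub_prime_cpow_ne_zero (Nat.prime_of_mem_primeFactors hp) hs
  have euler_factors := DirichletCharacter.LFunctionTrivChar_eq_mul_riemannZeta (N := N) s_ne_one
  rw [DirichletCharacter.LFunctionTrivChar] at euler_factors
  rw [euler_factors, aF, Finset.prod_inv_distrib]
  field_simp

theorem LFunction_mul_aF_of_isQuadratic {χ : DirichletCharacter ℂ N} (hχ : χ.IsQuadratic)
    (hs : 1 < s.re) :
    χ.LFunction s * aF (2 * s) N =
      riemannZeta (2 * s) * ∑' d : ℕ, if Squarefree d then χ d * (d : ℂ) ^ (-s) else 0 := by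
  have h2s := one_lt_re_two_mul hs
  rw [LFunction_eq_tsum_squarefree_mul_LFunction_sq χ hs, hχ.sq_eq_one, mul_assoc,
    LFunction_one_mul_aF h2s, mul_comm]

end LFunction

theorem dirichletCharacter_natCast_eq_zero_of_even {R : Type*} [CommMonoidWithZero R] {N n : ℕ}
    (χ : DirichletCharacter R N) (hN : Even N) (hn : Even n) : χ n = 0 :=
  χ.map_nonunit fun h ↦ Nat.not_coprime_of_dvd_of_dvd one_lt_two hn.two_dvd hN.two_dvd
    ((ZMod.isUnit_iff_coprime n N).mp h)

theorem jacobiSym_eight_mul (a : ℤ) {n : ℕ} (hn : Odd n) :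
    jacobiSym (8 * a) n = ZMod.χ₈ n * jacobiSym a n := by
  have two_cubed : jacobiSym 2 n ^ 3 = jacobiSym 2 n := by
    rcases jacobiSym.trichotomy 2 n with h | h | h <;> simp [h]
  rw [jacobiSym.mul_left, show (8 : ℤ) = 2 ^ 3 by norm_num, jacobiSym.pow_left, two_cubed,
    jacobiSym.at_two hn]

theorem norm_jacobiSym_le_one (a : ℤ) (n : ℕ) : ‖(jacobiSym a n : ℂ)‖ ≤ 1 := by
  rcases jacobiSym.trichotomy a n with h | h | h <;> simp [h]

theorem isQuadratic_of_eq_jacobiSym {N n : ℕ} [NeZero N] {ξ : DirichletCharacter ℂ N}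
    (hN : Even N) (hξ : ∀ m : ℕ, Odd m → ξ m = (jacobiSym m n : ℂ)) : ξ.IsQuadratic := by
  intro a
  obtain ⟨m, rfl⟩ := ZMod.natCast_zmod_surjective a
  rcases m.even_or_odd with hm | hm
  · exact .inl (dirichletCharacter_natCast_eq_zero_of_even ξ hN hm)
  · rw [hξ m hm]
    exact_mod_cast jacobiSym.trichotomy m n

section DoubleSeries

/-- The general term `(8d | n) d^{-w} n^{-s}` of the double Dirichlet series, set to `0` unless `d`
is odd and squarefree and `n` is odd. -/
def doubleDirichletTerm (s w : ℂ) (d n : ℕ) : ℂ :=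
  if Odd d ∧ Squarefree d ∧ Odd n then
    (jacobiSym (8 * d) n : ℂ) * (d : ℂ) ^ (-w) * (n : ℂ) ^ (-s) else 0

variable {s w : ℂ} {d n : ℕ}

theorem summable_norm_doubleDirichletTerm (hs : 1 < s.re) (hw : 1 < w.re) :
    Summable fun x : ℕ × ℕ ↦ ‖doubleDirichletTerm s w x.1 x.2‖ := by
  refine ((summable_riemannZetaSummand hw).mul_of_nonneg (summable_riemannZetaSummand hs)
    (fun _ ↦ norm_nonneg _) (fun _ ↦ norm_nonneg _)).of_nonneg_of_le (fun _ ↦ norm_nonneg _) ?_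
  rintro ⟨d, n⟩
  change _ ≤ ‖(d : ℂ) ^ (-w)‖ * ‖(n : ℂ) ^ (-s)‖
  rw [doubleDirichletTerm]
  split_ifs
  · rw [norm_mul, norm_mul]
    gcongr
    exact mul_le_of_le_one_left (norm_nonneg _) (norm_jacobiSym_le_one _ _)
  · rw [norm_zero]
    positivity

theorem LFunction_mul_cpow_eq_tsum_doubleDirichletTerm {N : ℕ} [NeZero N]
    {χ : DirichletCharacter ℂ N} (hN : Even N)
    (hχ : ∀ n : ℕ, Odd n → χ n = (jacobiSym (8 * d) n : ℂ)) (hd : Odd d) (hd' : Squarefree d)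
    (hs : 1 < s.re) :
    χ.LFunction s * (d : ℂ) ^ (-w) = ∑' n, doubleDirichletTerm s w d n := by
  rw [LFunction_eq_tsum_mul_cpow χ hs, ← tsum_mul_right]
  refine tsum_congr fun n ↦ ?_
  rcases n.even_or_odd with hn | hn
  · simp [doubleDirichletTerm, hn, dirichletCharacter_natCast_eq_zero_of_even χ hN hn]
  · rw [doubleDirichletTerm, if_pos ⟨hd, hd', hn⟩, hχ n hn]
    ring

theorem LFunction_mul_aF_mul_cpow_eq_tsum_doubleDirichletTerm {N : ℕ} [NeZero N]
    {ξ : DirichletCharacter ℂ N} (hN : Even N)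
    (hξ : ∀ m : ℕ, Odd m → ξ m = (jacobiSym m n : ℂ)) (hn : Odd n) (hw : 1 < w.re) :
    (ZMod.χ₈ n : ℂ) * ξ.LFunction w * aF (2 * w) N * (n : ℂ) ^ (-s) =
      riemannZeta (2 * w) * ∑' d, doubleDirichletTerm s w d n := by
  have term_eq (d : ℕ) : doubleDirichletTerm s w d n = (ZMod.χ₈ n : ℂ) * (n : ℂ) ^ (-s) *
      if Squarefree d then ξ d * (d : ℂ) ^ (-w) else 0 := by
    rcases d.even_or_odd with hd | hd
    · simp [doubleDirichletTerm, hd, dirichletCharacter_natCast_eq_zero_of_even ξ hN hd]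
    · simp only [doubleDirichletTerm, hd, hn, true_and, and_true, hξ d hd,
        jacobiSym_eight_mul _ hn, Int.cast_mul]
      split_ifs <;> ring
  simp only [term_eq, tsum_mul_left]
  linear_combination (ZMod.χ₈ n : ℂ) * (n : ℂ) ^ (-s) *
    LFunction_mul_aF_of_isQuadratic (isQuadratic_of_eq_jacobiSym hN hξ) hw

end DoubleSeries

theorem summable_norm_tsum_of_summable_norm_prod {α β E : Type*} [NormedAddCommGroup E]
    {F : α → β → E} (hF : Summable fun x : α × β ↦ ‖F x.1 x.2‖) :
    Summable fun a ↦ ‖∑' b, F a b‖ :=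
  hF.prod.of_nonneg_of_le (fun _ ↦ norm_nonneg _) fun a ↦
    norm_tsum_le_tsum_norm (hF.prod_factor a)

theorem summable_norm_and_tsum_eq_inv_mul_tsum {α β 𝕜 : Type*} [NormedField 𝕜] [CompleteSpace 𝕜]
    {F : α → β → 𝕜} {A : α → 𝕜} {B : β → 𝕜} {c : 𝕜} (hc : c ≠ 0)
    (hF : Summable fun x : α × β ↦ ‖F x.1 x.2‖) (hA : ∀ a, A a = ∑' b, F a b)
    (hB : ∀ b, B b = c * ∑' a, F a b) :
    Summable (‖A ·‖) ∧ Summable (‖B ·‖) ∧ ∑' a, A a = c⁻¹ * ∑' b, B b := by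
  simp only [hA, hB, norm_mul, tsum_mul_left, inv_mul_cancel_left₀ hc]
  have hF_swap : Summable fun x : β × α ↦ ‖F x.2 x.1‖ := hF.prod_symm
  have sum_comm : ∑' a, ∑' b, F a b = ∑' b, ∑' a, F a b :=
    Summable.tsum_comm (f := fun b a ↦ F a b) hF_swap.of_norm
  exact ⟨summable_norm_tsum_of_summable_norm_prod hF,
    (summable_norm_tsum_of_summable_norm_prod (F := fun b a ↦ F a b) hF_swap).mul_left _,
    sum_comm⟩

/-- expansion of the double Dirichlet series
`A(s,w) = Σ*_{d odd} L(s,χ_{8d}) d^{-w}` as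
`ζ(2w)^{-1} Σ_{n odd} χ₈(n) L(w, (·/4n)) a_{2w}(4n) n^{-s}` for `Re s > 1`, `Re w > 1`. -/
theorem statement12
    (χ : (d : ℕ) → DirichletCharacter ℂ (8 * d))
    (hχ : ∀ d : ℕ, Odd d → Squarefree d →
      (∀ n : ℕ, Odd n → χ d (n : ZMod (8 * d)) = ((jacobiSym (8 * d) n : ℤ) : ℂ)) ∧
      (∀ n : ℕ, Even n → χ d (n : ZMod (8 * d)) = 0))
    (ξ : (n : ℕ) → DirichletCharacter ℂ (4 * n))
    (hξ : ∀ n : ℕ, Odd n →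
      (∀ m : ℕ, Odd m → ξ n (m : ZMod (4 * n)) = ((jacobiSym (m : ℤ) n : ℤ) : ℂ)) ∧
      (∀ m : ℕ, Even m → ξ n (m : ZMod (4 * n)) = 0))
    (s w : ℂ) (hs : 1 < s.re) (hw : 1 < w.re) :
    Summable (fun d : ℕ => ‖(if h : Odd d ∧ Squarefree d then
        haveI : NeZero (8 * d) := ⟨by rcases h.1 with ⟨k, rfl⟩; omega⟩
        (χ d).LFunction s * (d : ℂ) ^ (-w) else 0)‖) ∧
    Summable (fun n : ℕ => ‖(if h : Odd n then
        haveI : NeZero (4 * n) := ⟨by rcases h with ⟨k, rfl⟩; omega⟩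
        ((ZMod.χ₈ (n : ZMod 8) : ℤ) : ℂ) * (ξ n).LFunction w * aF (2 * w) (4 * n) *
          (n : ℂ) ^ (-s) else 0)‖) ∧
    (∑' d : ℕ, if h : Odd d ∧ Squarefree d then
        haveI : NeZero (8 * d) := ⟨by rcases h.1 with ⟨k, rfl⟩; omega⟩
        (χ d).LFunction s * (d : ℂ) ^ (-w) else 0) =
      (riemannZeta (2 * w))⁻¹ *
      ∑' n : ℕ, if h : Odd n then
        haveI : NeZero (4 * n) := ⟨by rcases h with ⟨k, rfl⟩; omega⟩
        ((ZMod.χ₈ (n : ZMod 8) : ℤ) : ℂ) * (ξ n).LFunction w * aF (2 * w) (4 * n) *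
          (n : ℂ) ^ (-s) else 0 := by
  have zeta_ne_zero : riemannZeta (2 * w) ≠ 0 :=
    riemannZeta_ne_zero_of_one_lt_re (one_lt_re_two_mul hw)
  refine summable_norm_and_tsum_eq_inv_mul_tsum zeta_ne_zero
    (summable_norm_doubleDirichletTerm hs hw) (fun d ↦ ?_) (fun n ↦ ?_)
  · split_ifs with h
    · have : NeZero (8 * d) := ⟨mul_ne_zero (by norm_num) h.1.pos.ne'⟩
      exact LFunction_mul_cpow_eq_tsum_doubleDirichletTerm (.mul_right (by decide) _)
        (hχ d h.1 h.2).1 h.1 h.2 hs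
    · simp [doubleDirichletTerm, ← and_assoc, h]
  · split_ifs with h
    · have : NeZero (4 * n) := ⟨mul_ne_zero (by norm_num) h.pos.ne'⟩
      exact LFunction_mul_aF_mul_cpow_eq_tsum_doubleDirichletTerm (.mul_right (by decide) _)
        (hξ n h).1 h hw
    · simp [doubleDirichletTerm, h]
end
end
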